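/- arXiv:2409.01868 — 3 statements merged into one kernel-verified Lean document; each statement's English description precedes it below -/
import Mathlib

section
/- Let S : L¹(ℝ^d) → L¹(ℝ^d) be a positive bounded linear operator such that for some k ∈ ℕ and κ₀ > 0: (1) there exists g₀ ∈ L¹₊ \ {0} with S g₀ ≥ κ₀ g₀, or there exists ψ₀ ∈ L^∞₊ \ {0} with S* ψ₀ ≥ κ₀ ψ₀; (2) S^k = W + K with ‖W‖ < κ₀^k and K weakly compact in L¹; (3) for every f ∈ L¹₊ \ {0}, S^k f(x) > 0 for almost every x ∈ ℝ^d. Let (Λ₀, f₀, φ₀) be the triplet with S f₀ = Λ₀ f₀, S* φ₀ = Λ₀ φ₀, ‖φ₀‖_{L^∞} = ⟨φ₀, f₀⟩ = 1. Then there exist ζ ∈ (0, 1) and C ≥ 1 such that for every n ∈ ℕ and every f ∈ L¹(ℝ^d), ‖Λ₀^{−n} Sⁿ f − ⟨φ₀, f⟩ f₀‖_{L¹} ≤ C ζⁿ ‖f − ⟨φ₀, f⟩ f₀‖_{L¹}. -/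
open MeasureTheory Filter ENNReal

/-!
Weak compactness makes the image of the unit ball under `B = S ^ k / Λ₀ ^ k` equi-integrable up to
an error `γ < 1`, that is, dominated by a multiple of the eigenfunction `f₀ > 0` up to norm `γ`.
Dividing by `f₀` replaces the measure by a finite one and `f₀` by the constant `1`. Domination and
the strict positivity of `Φ = ⟨φ₀, ·⟩` yield the Lyapunov inequality
`‖B f‖ ≤ γ' ‖f‖ + C Φ f` with `γ' < 1`.

No minorisation of `B` is assumed, so that of Harris's theorem has to come from compactness: some
power of `B` maps all unit masses carried by a suitable set of positive measure into a thin slice of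
a bounded set, where truncations nearly agree in `L¹`, so any two of the images overlap. By strict
positivity another power sends a fixed proportion of the mass to that set. Lyapunov inequality and
overlap together contract a weighted norm on `ker Φ`.
-/

section Powers

variable {E : Type*} [NormedAddCommGroup E] [NormedSpace ℝ E] {P : E →L[ℝ] E}

lemma apply_pow_apply_of_apply_apply_eq_mul {Φ : E →L[ℝ] ℝ} {c : ℝ}
    (hΦ : ∀ f, Φ (P f) = c * Φ f) (n : ℕ) (f : E) : Φ ((P ^ n) f) = c ^ n * Φ f := by
  induction n with
  | zero => simp
  | succ n ih => rw [pow_succ', pow_succ', mul_assoc, ← ih, ← hΦ]; rfl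

lemma apply_pow_apply_of_apply_apply {Φ : E →L[ℝ] ℝ} (hΦ : ∀ f, Φ (P f) = Φ f)
    (n : ℕ) (f : E) : Φ ((P ^ n) f) = Φ f := by
  simpa using apply_pow_apply_of_apply_apply_eq_mul (c := 1) (by simpa using hΦ) n f

lemma pow_apply_eq_pow_smul {e : E} {c : ℝ} (he : P e = c • e) (n : ℕ) :
    (P ^ n) e = c ^ n • e := by
  induction n with
  | zero => simp
  | succ n ih =>
    calc (P ^ (n + 1)) e = P ((P ^ n) e) := by rw [pow_succ']; rfl
      _ = c ^ (n + 1) • e := by rw [ih, map_smul, he, smul_smul, pow_succ]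

lemma pow_apply_eq_self {e : E} (he : P e = e) (n : ℕ) : (P ^ n) e = e := by
  simpa using pow_apply_eq_pow_smul (c := 1) (by simpa using he) n

lemma monotone_pow [Preorder E] (hP : Monotone P) (n : ℕ) :
    Monotone (P ^ n : E →L[ℝ] E) := by
  rw [FunLike.coe_pow_eq_iterate]
  exact hP.iterate n

lemma abs_apply_le_apply_abs [Lattice E] (hP : Monotone P) (f : E) : |P f| ≤ P |f| :=
  sup_le (hP (le_abs_self f)) (by rw [← map_neg]; exact hP (neg_le_abs f))

end Powers

lemma exists_lt_one_le_pow {ρ : ℝ} (hρ : ρ < 1) (m : ℕ) :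
    ∃ ζ : ℝ, 0 < ζ ∧ ζ < 1 ∧ ρ ≤ ζ ^ m := by
  have htendsto : Tendsto (fun ζ : ℝ => ζ ^ m) (nhdsWithin 1 (Set.Iio 1)) (nhds 1) := by
    simpa using ((continuous_pow m).tendsto (1 : ℝ)).mono_left nhdsWithin_le_nhds
  have hIoo : ∀ᶠ ζ in nhdsWithin (1 : ℝ) (Set.Iio 1), ζ ∈ Set.Ioo 0 1 := Ioo_mem_nhdsLT one_pos
  obtain ⟨ζ, ⟨hζ₀, hζ₁⟩, hζ⟩ := (hIoo.and (htendsto.eventually_const_le hρ)).exists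
  exact ⟨ζ, hζ₀, hζ₁, hζ⟩

lemma le_max_one_pow_mul {u : ℕ → ℝ} (hu₀ : ∀ n, 0 ≤ u n) {L : ℝ}
    (huL : ∀ n, u (n + 1) ≤ L * u n) (n : ℕ) : u n ≤ max 1 L ^ n * u 0 := by
  induction n with
  | zero => simp
  | succ n ih =>
    calc u (n + 1) ≤ max 1 L * u n :=
          (huL n).trans (mul_le_mul_of_nonneg_right (le_max_right 1 L) (hu₀ n))
      _ ≤ max 1 L * (max 1 L ^ n * u 0) := by gcongr
      _ = max 1 L ^ (n + 1) * u 0 := by ring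

lemma exists_geometric_bound {ρ : ℝ} (hρ : ρ < 1) (m : ℕ) (L : ℝ) :
    ∃ ζ : ℝ, 0 < ζ ∧ ζ < 1 ∧ ∃ C : ℝ, 1 ≤ C ∧ ∀ u : ℕ → ℝ, (∀ n, 0 ≤ u n) →
      (∀ n, u (n + 1) ≤ L * u n) → (∀ n, u (n + m) ≤ ρ * u n) → ∀ n, u n ≤ C * ζ ^ n * u 0 := by
  obtain ⟨ζ, hζ₀, hζ₁, hρζ⟩ := exists_lt_one_le_pow hρ m
  have hL : 1 ≤ max 1 L ^ m := one_le_pow₀ (le_max_left 1 L)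
  have hζm : 0 < ζ ^ m := by positivity
  refine ⟨ζ, hζ₀, hζ₁, max 1 L ^ m / ζ ^ m, ?_, fun u hu₀ huL hum n => ?_⟩
  · exact (one_le_div hζm).2 ((pow_le_one₀ hζ₀.le hζ₁.le).trans hL)
  have hgrowth := le_max_one_pow_mul hu₀ huL
  have hu0 := hu₀ 0
  induction n using Nat.strong_induction_on with
  | _ n ih =>
    obtain hn | hn := le_total n m
    · calc u n ≤ max 1 L ^ m * u 0 := (hgrowth n).trans (by gcongr; exact le_max_left 1 L)
        _ = max 1 L ^ m / ζ ^ m * ζ ^ m * u 0 := by rw [div_mul_cancel₀ _ hζm.ne']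
        _ ≤ max 1 L ^ m / ζ ^ m * ζ ^ n * u 0 := by
          gcongr ?_ * ?_ * _
          exact pow_le_pow_of_le_one hζ₀.le hζ₁.le hn
    · obtain ⟨j, rfl⟩ := Nat.exists_eq_add_of_le' hn
      obtain rfl | hm := Nat.eq_zero_or_pos m
      · have hj : u j = 0 := by
          have huj := hum j
          rw [add_zero] at huj
          nlinarith [hu₀ j]
        simpa [hj] using mul_nonneg (by positivity : 0 ≤ ζ ^ j) hu0
      · calc u (j + m) ≤ ζ ^ m * u j := (hum j).trans (mul_le_mul_of_nonneg_right hρζ (hu₀ j))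
          _ ≤ ζ ^ m * (max 1 L ^ m / ζ ^ m * ζ ^ j * u 0) := by
            gcongr
            exact ih j (by omega)
          _ = max 1 L ^ m / ζ ^ m * ζ ^ (j + m) * u 0 := by ring

lemma add_mul_le_of_mul_le {a a' x x' R β θ : ℝ} (hR : 0 < R) (hβ : 0 < β) (hθ : θ ≤ 1)
    (ha : a' ≤ a) (hx : x' ≤ θ * x) (hax : R * a ≤ x) :
    a' + β * x' ≤ (1 / R + β * θ) / (1 / R + β) * (a + β * x) := by
  have hgap : 0 ≤ β * (1 - θ) * (x / R - a) :=
    mul_nonneg (mul_nonneg hβ.le (sub_nonneg.2 hθ)) (sub_nonneg.2 ((le_div_iff₀' hR).2 hax))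
  rw [div_mul_eq_mul_div, le_div_iff₀ (by positivity)]
  calc (a' + β * x') * (1 / R + β) ≤ (a + β * (θ * x)) * (1 / R + β) := by gcongr
    _ = (1 / R + β * θ) * (a + β * x) - β * (1 - θ) * (x / R - a) := by ring
    _ ≤ (1 / R + β * θ) * (a + β * x) := sub_le_self _ hgap

section NormedLatticeGroup

variable {E : Type*} [NormedAddCommGroup E] [Lattice E] [IsOrderedAddMonoid E] [HasSolidNorm E]

lemma norm_le_norm_of_nonneg_of_le {f g : E} (hf : 0 ≤ f) (hfg : f ≤ g) : ‖f‖ ≤ ‖g‖ :=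
  norm_le_norm_of_abs_le_abs (by rwa [abs_of_nonneg hf, abs_of_nonneg (hf.trans hfg)])

lemma norm_posPart_le_norm (f : E) : ‖f⁺‖ ≤ ‖f‖ :=
  (norm_le_norm_of_nonneg_of_le (posPart_nonneg f)
    (sup_le (le_abs_self f) (abs_nonneg f))).trans_eq (norm_abs_eq_norm f)

lemma norm_negPart_le_norm (f : E) : ‖f⁻‖ ≤ ‖f‖ :=
  (norm_le_norm_of_nonneg_of_le (negPart_nonneg f)
    (sup_le (neg_le_abs f) (abs_nonneg f))).trans_eq (norm_abs_eq_norm f)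

end NormedLatticeGroup

section NormedLattice

variable {E : Type*} [NormedAddCommGroup E] [NormedSpace ℝ E] [Lattice E]

/-- `P` maps the positive part of the unit ball into an order interval `[0, M • e]`, up to an error
of norm at most `γ`. On `L¹` and for small `γ` this is the equi-integrability of the image. -/
def AlmostDominated (P : E →L[ℝ] E) (e : E) (γ : ℝ) : Prop :=
  ∃ M : ℝ, 0 ≤ M ∧ ∀ f, 0 ≤ f → ∃ r, 0 ≤ r ∧ P f ≤ (M * ‖f‖) • e + r ∧ ‖r‖ ≤ γ * ‖f‖

lemma almostDominated_of_norm_eq_one [PosSMulMono ℝ E] {P : E →L[ℝ] E} {e : E} {γ M : ℝ}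
    (hM : 0 ≤ M)
    (h : ∀ f, 0 ≤ f → ‖f‖ = 1 → ∃ r, 0 ≤ r ∧ P f ≤ M • e + r ∧ ‖r‖ ≤ γ) :
    AlmostDominated P e γ := by
  refine ⟨M, hM, fun f hf => ?_⟩
  obtain rfl | hf₀ := eq_or_ne f 0
  · exact ⟨0, le_rfl, by simp, by simp⟩
  have hpos : 0 < ‖f‖ := norm_pos_iff.2 hf₀
  obtain ⟨r, hr, hle, hrγ⟩ := h (‖f‖⁻¹ • f) (smul_nonneg (by positivity) hf)
    (norm_smul_inv_norm (𝕜 := ℝ) hf₀)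
  refine ⟨‖f‖ • r, smul_nonneg hpos.le hr, ?_, ?_⟩
  · calc P f = ‖f‖ • P (‖f‖⁻¹ • f) := by rw [map_smul, smul_inv_smul₀ hpos.ne']
      _ ≤ ‖f‖ • (M • e + r) := smul_le_smul_of_nonneg_left hle hpos.le
      _ = (M * ‖f‖) • e + ‖f‖ • r := by rw [smul_add, smul_smul, mul_comm]
  · rw [norm_smul, norm_norm, mul_comm]
    gcongr

lemma apply_pow_le_of_apply_le {P : E →L[ℝ] E} {Φ : E →L[ℝ] ℝ} (hP : Monotone P)
    (hΦ : Monotone Φ) (hΦP : ∀ f, Φ (P f) = Φ f) {γ C : ℝ} (hγ₀ : 0 ≤ γ) (hγ : γ < 1)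
    (hC : 0 ≤ C) (h : ∀ f, 0 ≤ f → ‖P f‖ ≤ γ * ‖f‖ + C * Φ f) (n : ℕ) {f : E} (hf : 0 ≤ f) :
    ‖(P ^ n) f‖ ≤ γ ^ n * ‖f‖ + C / (1 - γ) * Φ f := by
  have hγ' : 0 < 1 - γ := sub_pos.2 hγ
  induction n with
  | zero => simpa using mul_nonneg (by positivity : 0 ≤ C / (1 - γ)) (by simpa using hΦ hf)
  | succ n ih =>
    calc ‖(P ^ (n + 1)) f‖ = ‖P ((P ^ n) f)‖ := by rw [pow_succ']; rfl
      _ ≤ γ * ‖(P ^ n) f‖ + C * Φ f := by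
        have hPf : 0 ≤ (P ^ n) f := map_zero (P ^ n) ▸ monotone_pow hP n hf
        simpa only [apply_pow_apply_of_apply_apply hΦP] using h _ hPf
      _ ≤ γ * (γ ^ n * ‖f‖ + C / (1 - γ) * Φ f) + C * Φ f := by gcongr
      _ = γ ^ (n + 1) * ‖f‖ + C / (1 - γ) * Φ f := by field_simp; ring

variable [IsOrderedAddMonoid E]

lemma AlmostDominated.pow [IsOrderedModule ℝ E] {P : E →L[ℝ] E} {e : E} {γ : ℝ}
    (h : AlmostDominated P e γ) (hP : Monotone P) (he₀ : 0 ≤ e) (he : P e = e) (hγ : 0 ≤ γ)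
    (n : ℕ) : AlmostDominated (P ^ n) e (γ ^ n) := by
  obtain ⟨M, hM, h⟩ := h
  induction n with
  | zero => exact ⟨0, le_rfl, fun f hf => ⟨f, hf, by simp, by simp⟩⟩
  | succ n ih =>
    obtain ⟨N, hN, ih⟩ := ih
    refine ⟨N + M * γ ^ n, by positivity, fun f hf => ?_⟩
    obtain ⟨r, hr, hfr, hrγ⟩ := ih f hf
    obtain ⟨s, hs, hrs, hsγ⟩ := h r hr
    refine ⟨s, hs, ?_, ?_⟩
    · have hMr : (M * ‖r‖) • e ≤ (M * (γ ^ n * ‖f‖)) • e :=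
        smul_le_smul_of_nonneg_right (by gcongr) he₀
      calc (P ^ (n + 1)) f = P ((P ^ n) f) := by rw [pow_succ']; rfl
        _ ≤ P ((N * ‖f‖) • e + r) := hP hfr
        _ = (N * ‖f‖) • e + P r := by rw [map_add, map_smul, he]
        _ ≤ (N * ‖f‖) • e + ((M * (γ ^ n * ‖f‖)) • e + s) := by grw [hrs, hMr]
        _ = ((N + M * γ ^ n) * ‖f‖) • e + s := by rw [← add_assoc, ← add_smul]; ring_nf
    · calc ‖s‖ ≤ γ * (γ ^ n * ‖f‖) := by grw [hsγ, hrγ]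
        _ = γ ^ (n + 1) * ‖f‖ := by ring

lemma apply_abs_sub_eq (Φ : E →L[ℝ] ℝ) (f g : E) : Φ |f - g| = Φ f + Φ g - 2 * Φ (f ⊓ g) := by
  have h := congrArg Φ (two_nsmul_inf_eq_add_sub_abs_sub f g)
  rw [map_nsmul, map_sub, map_add, nsmul_eq_mul, abs_sub_comm] at h
  push_cast at h
  linarith

lemma apply_posPart_eq_half_of_apply_eq_zero {Φ : E →L[ℝ] ℝ} {g : E} (hg : Φ g = 0) :
    Φ g⁺ = Φ |g| / 2 ∧ Φ g⁻ = Φ |g| / 2 := by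
  have habs : Φ g⁺ + Φ g⁻ = Φ |g| := by rw [← map_add, posPart_add_negPart]
  have hsub : Φ g⁺ - Φ g⁻ = 0 := by rw [← map_sub, posPart_sub_negPart, hg]
  constructor <;> linarith

variable [HasSolidNorm E] {Q : E →L[ℝ] E} {Φ : E →L[ℝ] ℝ}

lemma apply_abs_apply_le_of_overlap (hΦQ : ∀ f, Φ (Q f) = Φ f) {R c : ℝ}
    (hoverlap : ∀ f g, 0 ≤ f → 0 ≤ g → Φ f = Φ g → ‖f‖ ≤ R * Φ f → ‖g‖ ≤ R * Φ g →
      c * Φ f ≤ Φ (Q f ⊓ Q g))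
    {g : E} (hg₀ : Φ g = 0) (hg : 2 * ‖g‖ ≤ R * Φ |g|) : Φ |Q g| ≤ (1 - c) * Φ |g| := by
  obtain ⟨hpos, hneg⟩ := apply_posPart_eq_half_of_apply_eq_zero hg₀
  have h := hoverlap g⁺ g⁻ (posPart_nonneg g) (negPart_nonneg g) (hpos.trans hneg.symm)
    (by rw [hpos]; linarith [norm_posPart_le_norm g])
    (by rw [hneg]; linarith [norm_negPart_le_norm g])
  calc Φ |Q g| = Φ |Q g⁺ - Q g⁻| := by rw [← map_sub, posPart_sub_negPart]
    _ = Φ g⁺ + Φ g⁻ - 2 * Φ (Q g⁺ ⊓ Q g⁻) := by rw [apply_abs_sub_eq, hΦQ, hΦQ]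
    _ ≤ (1 - c) * Φ |g| := by rw [hpos] at h ⊢; rw [hneg]; linarith

lemma norm_apply_le_of_forall_nonneg (hQ : Monotone Q) {γ C : ℝ}
    (h : ∀ f, 0 ≤ f → ‖Q f‖ ≤ γ * ‖f‖ + C * Φ f) (g : E) :
    ‖Q g‖ ≤ γ * ‖g‖ + C * Φ |g| := by
  rw [← norm_abs_eq_norm g, ← norm_abs_eq_norm (Q g)]
  exact (norm_le_norm_of_nonneg_of_le (abs_nonneg _) (abs_apply_le_apply_abs hQ g)).trans
    (h |g| (abs_nonneg g))

/-- In the weighted norm `Φ |·| + β ‖·‖`, with `β` small, elements whose norm is large compared with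
`Φ |·|` are contracted by the Lyapunov inequality and all others by the overlap. -/
lemma exists_weighted_norm_contraction (hQ : Monotone Q) (hΦ : Monotone Φ)
    (hΦQ : ∀ f, Φ (Q f) = Φ f) {γ C R c : ℝ}
    (hγ : 0 ≤ γ) (hC : 0 ≤ C) (hR : 0 < R) (hCR : γ + C / R < 1) (hc : 0 < c)
    (hLyapunov : ∀ f, 0 ≤ f → ‖Q f‖ ≤ γ * ‖f‖ + C * Φ f)
    (hoverlap : ∀ f g, 0 ≤ f → 0 ≤ g → Φ f = Φ g → ‖f‖ ≤ 2 * R * Φ f → ‖g‖ ≤ 2 * R * Φ g →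
      c * Φ f ≤ Φ (Q f ⊓ Q g)) :
    ∃ β, 0 < β ∧ ∃ ρ, 0 ≤ ρ ∧ ρ < 1 ∧ ∀ g, Φ g = 0 →
      Φ |Q g| + β * ‖Q g‖ ≤ ρ * (Φ |g| + β * ‖g‖) := by
  set θ := γ + C / R
  have : 0 ≤ θ := by positivity
  have hγθ : γ ≤ θ := le_add_of_nonneg_right (by positivity)
  obtain ⟨β, hβ, hβC⟩ : ∃ β, 0 < β ∧ β * C ≤ c / 2 := by
    refine ⟨c / (2 * (C + 1)), by positivity, ?_⟩
    rw [div_mul_eq_mul_div, div_le_div_iff₀ (by positivity) two_pos]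
    nlinarith
  set ρ := (1 / R + β * θ) / (1 / R + β) with hρ
  have hρ₀ : 0 ≤ ρ := by positivity
  have hρ₁ : ρ < 1 := by
    rw [hρ, div_lt_one (by positivity)]
    nlinarith
  refine ⟨β, hβ, max ρ (max θ (1 - c / 2)), hρ₀.trans (le_max_left _ _),
    max_lt hρ₁ (max_lt hCR (by linarith)), fun g hg₀ => ?_⟩
  have hΦg : 0 ≤ Φ |g| := by simpa using hΦ (abs_nonneg g)
  have hQg := norm_apply_le_of_forall_nonneg hQ hLyapunov g
  obtain hfar | hnear := le_total (R * Φ |g|) ‖g‖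
  · have hΦQg : Φ |Q g| ≤ Φ |g| := (hΦ (abs_apply_le_apply_abs hQ g)).trans_eq (hΦQ _)
    have hΦgR : Φ |g| ≤ ‖g‖ / R := by rwa [le_div_iff₀' hR]
    have hQgθ : ‖Q g‖ ≤ θ * ‖g‖ := by
      calc ‖Q g‖ ≤ γ * ‖g‖ + C * (‖g‖ / R) := by grw [hQg, hΦgR]
        _ = θ * ‖g‖ := by ring
    refine (add_mul_le_of_mul_le hR hβ hCR.le hΦQg hQgθ hfar).trans ?_
    gcongr
    exact le_max_left _ _
  · have hΦQg := apply_abs_apply_le_of_overlap hΦQ hoverlap hg₀ (by linarith)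
    calc Φ |Q g| + β * ‖Q g‖ ≤ (1 - c) * Φ |g| + β * (γ * ‖g‖ + C * Φ |g|) := by
          grw [hΦQg, hQg]
      _ = (1 - c + β * C) * Φ |g| + γ * (β * ‖g‖) := by ring
      _ ≤ (1 - c / 2) * Φ |g| + θ * (β * ‖g‖) := by gcongr; linarith
      _ ≤ max ρ (max θ (1 - c / 2)) * Φ |g| + max ρ (max θ (1 - c / 2)) * (β * ‖g‖) := by
        gcongr <;> simp
      _ = _ := by ring

theorem exists_pow_norm_le_half_of_lyapunov_of_overlap (hQ : Monotone Q) (hΦ : Monotone Φ)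
    (hΦQ : ∀ f, Φ (Q f) = Φ f) {γ C R c : ℝ}
    (hγ : 0 ≤ γ) (hC : 0 ≤ C) (hR : 0 < R) (hCR : γ + C / R < 1) (hc : 0 < c)
    (hLyapunov : ∀ f, 0 ≤ f → ‖Q f‖ ≤ γ * ‖f‖ + C * Φ f)
    (hoverlap : ∀ f g, 0 ≤ f → 0 ≤ g → Φ f = Φ g → ‖f‖ ≤ 2 * R * Φ f → ‖g‖ ≤ 2 * R * Φ g →
      c * Φ f ≤ Φ (Q f ⊓ Q g)) :
    ∃ n, ∀ g, Φ g = 0 → ‖(Q ^ n) g‖ ≤ 1 / 2 * ‖g‖ := by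
  obtain ⟨β, hβ, ρ, hρ₀, hρ₁, hcontr⟩ :=
    exists_weighted_norm_contraction hQ hΦ hΦQ hγ hC hR hCR hc hLyapunov hoverlap
  have hiter (n : ℕ) (g : E) (hg : Φ g = 0) :
      Φ |(Q ^ n) g| + β * ‖(Q ^ n) g‖ ≤ ρ ^ n * (Φ |g| + β * ‖g‖) := by
    induction n with
    | zero => simp
    | succ n ih =>
      rw [pow_succ' Q, pow_succ' ρ, mul_assoc]
      exact (hcontr _ ((apply_pow_apply_of_apply_apply hΦQ n g).trans hg)).trans (by gcongr)
  obtain ⟨n, hn⟩ := exists_pow_lt_of_lt_one (by positivity : 0 < β / (2 * (‖Φ‖ + β))) hρ₁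
  rw [lt_div_iff₀ (by positivity)] at hn
  refine ⟨n, fun g hg => ?_⟩
  have hΦg : Φ |g| ≤ ‖Φ‖ * ‖g‖ := by
    simpa [norm_abs_eq_norm] using (le_abs_self _).trans (Φ.le_opNorm |g|)
  have hΦQg : 0 ≤ Φ |(Q ^ n) g| := by simpa using hΦ (abs_nonneg ((Q ^ n) g))
  refine le_of_mul_le_mul_left ?_ hβ
  calc β * ‖(Q ^ n) g‖ ≤ ρ ^ n * (‖Φ‖ * ‖g‖ + β * ‖g‖) := by grw [← hΦg, ← hiter n g hg]; linarith
    _ = ρ ^ n * (2 * (‖Φ‖ + β)) * (1 / 2 * ‖g‖) := by ring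
    _ ≤ β * (1 / 2 * ‖g‖) := by gcongr

end NormedLattice

/-- Strict positivity of a functional with respect to the cone of an ordered space. -/
def StrictlyPositive {E : Type*} [NormedAddCommGroup E] [NormedSpace ℝ E] [Preorder E]
    (Φ : E →L[ℝ] ℝ) : Prop :=
  ∀ ⦃f⦄, 0 ≤ f → f ≠ 0 → 0 < Φ f

lemma StrictlyPositive.apply_nonneg {E : Type*} [NormedAddCommGroup E] [NormedSpace ℝ E]
    [Preorder E] {Φ : E →L[ℝ] ℝ} (hΦ : StrictlyPositive Φ) {f : E} (hf : 0 ≤ f) : 0 ≤ Φ f := by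
  obtain rfl | hf₀ := eq_or_ne f 0
  · exact (map_zero Φ).ge
  · exact (hΦ hf hf₀).le

lemma StrictlyPositive.monotone {E : Type*} [NormedAddCommGroup E] [NormedSpace ℝ E]
    [PartialOrder E] [IsOrderedAddMonoid E] {Φ : E →L[ℝ] ℝ} (hΦ : StrictlyPositive Φ) :
    Monotone Φ := fun f g hfg =>
  sub_nonneg.1 ((hΦ.apply_nonneg (sub_nonneg.2 hfg)).trans_eq (map_sub Φ g f))

section Lebesgue

variable {α : Type*} [MeasurableSpace α] {μ : Measure α}

instance instIsOrderedModuleLp (p : ℝ≥0∞) : IsOrderedModule ℝ (Lp ℝ p μ) :=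
  have smul_nonneg_Lp {c : ℝ} (hc : 0 ≤ c) {f : Lp ℝ p μ} (hf : 0 ≤ f) : 0 ≤ c • f := by
    rw [← Lp.coeFn_nonneg] at hf ⊢
    filter_upwards [hf, Lp.coeFn_smul c f] with x hfx hcfx
    rw [hcfx]
    exact mul_nonneg hc hfx
  .of_smul_nonneg fun _ hc _ hf => smul_nonneg_Lp hc hf

/-- The set integral `f ↦ ∫ x in s, f x ∂μ` as a functional on `L¹(μ)`. -/
noncomputable def setIntegralCLM (μ : Measure α) (s : Set α) : Lp ℝ 1 μ →L[ℝ] ℝ :=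
  L1.integralCLM.comp (LpToLpRestrictCLM α ℝ ℝ μ 1 s)

lemma setIntegralCLM_apply (s : Set α) (f : Lp ℝ 1 μ) :
    setIntegralCLM μ s f = ∫ x in s, f x ∂μ := by
  rw [← integral_congr_ae (LpToLpRestrictCLM_coeFn ℝ s f), ← L1.integral_eq_integral,
    L1.integral_eq]
  rfl

/-- The functional `⟨φ, ·⟩` on `L¹(μ)` represented by `φ ∈ L^∞(μ)`. -/
noncomputable def linftyPairing (φ : Lp ℝ ∞ μ) : Lp ℝ 1 μ →L[ℝ] ℝ :=
  (ContinuousLinearMap.mul ℝ ℝ).lpPairing μ ∞ 1 φ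

lemma linftyPairing_apply (φ : Lp ℝ ∞ μ) (f : Lp ℝ 1 μ) :
    linftyPairing φ f = ∫ x, φ x * f x ∂μ :=
  ContinuousLinearMap.lpPairing_eq_integral ..

lemma integrable_linfty_mul_L1 (φ : Lp ℝ ∞ μ) (f : Lp ℝ 1 μ) :
    Integrable (fun x => φ x * f x) μ :=
  (L1.integrable_coeFn f).mul_of_top_right (Lp.memLp φ)

lemma norm_eq_integral_of_nonneg {f : Lp ℝ 1 μ} (hf : 0 ≤ f) : ‖f‖ = ∫ x, f x ∂μ := by
  rw [L1.norm_eq_integral_norm]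
  refine integral_congr_ae ?_
  filter_upwards [(Lp.coeFn_nonneg f).2 hf] with x hx using Real.norm_of_nonneg hx

lemma abs_setIntegral_le_norm (s : Set α) (f : Lp ℝ 1 μ) : |∫ x in s, f x ∂μ| ≤ ‖f‖ := by
  rw [L1.norm_eq_integral_norm]
  exact (norm_integral_le_integral_norm _).trans
    (setIntegral_le_integral (L1.integrable_coeFn f).norm (ae_of_all _ fun _ => norm_nonneg _))

lemma exists_restriction_of_nonneg {s : Set α} (hs : MeasurableSet s) {f : Lp ℝ 1 μ}
    (hf : 0 ≤ f) :
    ∃ g, 0 ≤ g ∧ g ≤ f ∧ (∀ᵐ x ∂μ, x ∉ s → g x = 0) ∧ ‖g‖ = ∫ x in s, f x ∂μ := by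
  have hmem : MemLp (s.indicator f) 1 μ := (Lp.memLp f).indicator hs
  have hind : hmem.toLp =ᵐ[μ] s.indicator f := hmem.coeFn_toLp
  rw [← Lp.coeFn_nonneg] at hf
  have hg : 0 ≤ hmem.toLp := by
    rw [← Lp.coeFn_nonneg]
    filter_upwards [hind, hf] with x hx hfx
    rw [hx]
    exact Set.indicator_nonneg (fun _ _ => hfx) x
  refine ⟨hmem.toLp, hg, ?_, ?_, ?_⟩
  · rw [← Lp.coeFn_le]
    filter_upwards [hind, hf] with x hx hfx
    rw [hx]
    exact Set.indicator_apply_le' (fun _ => le_rfl) (fun _ => hfx)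
  · filter_upwards [hind] with x hx hxs
    rw [hx, Set.indicator_of_notMem hxs]
  · rw [norm_eq_integral_of_nonneg hg, integral_congr_ae hind, integral_indicator hs]

lemma smul_ae_eq_zero_of_notMem {s : Set α} {f : Lp ℝ 1 μ}
    (hf : ∀ᵐ x ∂μ, x ∉ s → f x = 0) (c : ℝ) : ∀ᵐ x ∂μ, x ∉ s → (c • f) x = 0 := by
  filter_upwards [hf, Lp.coeFn_smul c f] with x hx hcx hxs
  rw [hcx, Pi.smul_apply, hx hxs, smul_zero]

lemma strictlyPositive_setIntegralCLM_comp {P : Lp ℝ 1 μ →L[ℝ] Lp ℝ 1 μ}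
    (hP₀ : ∀ f, 0 ≤ f → f ≠ 0 → ∀ᵐ x ∂μ, 0 < P f x) {s : Set α} (hμs : μ s ≠ 0) :
    StrictlyPositive ((setIntegralCLM μ s).comp P) := by
  intro f hf hf₀
  have hpos : ∀ᵐ x ∂μ.restrict s, 0 < P f x := ae_restrict_of_ae (hP₀ f hf hf₀)
  have hsupp : Function.support (P f) =ᵐ[μ.restrict s] Set.univ :=
    eventuallyEq_univ.2 (hpos.mono fun _ hx => hx.ne')
  rw [ContinuousLinearMap.comp_apply, setIntegralCLM_apply,
    integral_pos_iff_support_of_nonneg_ae (hpos.mono fun _ hx => hx.le)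
      (L1.integrable_coeFn _).integrableOn, measure_congr hsupp, Measure.restrict_apply_univ]
  exact pos_iff_ne_zero.2 hμs

end Lebesgue

section FiniteMeasure

variable {α : Type*} [MeasurableSpace α] {ν : Measure α} [IsFiniteMeasure ν]

/-- On a finite measure `L² ⊆ L¹`, so `ℓ` restricts to `L²`, where Riesz's theorem provides the
density. -/
lemma exists_forall_indicator_eq_setIntegral (ℓ : Lp ℝ 1 ν →L[ℝ] ℝ) :
    ∃ b : Lp ℝ 2 ν, ∀ s (hs : MeasurableSet s),
      ℓ (indicatorConstLp 1 hs (measure_ne_top ν s) 1) = ∫ x in s, b x ∂ν := by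
  have hone : MemLp (fun _ => (1 : ℝ)) 2 ν := memLp_const 1
  let J : Lp ℝ 2 ν →L[ℝ] Lp ℝ 1 ν := (ContinuousLinearMap.mul ℝ ℝ).holderL ν 2 2 1 (hone.toLp _)
  have hJ (h : Lp ℝ 2 ν) : J h =ᵐ[ν] h := by
    filter_upwards [(ContinuousLinearMap.mul ℝ ℝ).coeFn_holder (r := 1) (hone.toLp _) h,
      hone.coeFn_toLp] with x hx hx₁
    change ((ContinuousLinearMap.mul ℝ ℝ).holder 1 (hone.toLp _) h) x = _
    rw [hx, hx₁, ContinuousLinearMap.mul_apply', one_mul]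
  refine ⟨(InnerProductSpace.toDual ℝ (Lp ℝ 2 ν)).symm (ℓ.comp J), fun s hs => ?_⟩
  rw [← L2.inner_indicatorConstLp_one (𝕜 := ℝ) hs (measure_ne_top ν s), real_inner_comm,
    InnerProductSpace.toDual_symm_apply]
  refine congrArg ℓ (Lp.ext ?_)
  exact indicatorConstLp_coeFn.trans (indicatorConstLp_coeFn.symm.trans (hJ _).symm)

lemma ae_norm_le_of_abs_setIntegral_le {b : α → ℝ} (hb : Integrable b ν) {c : ℝ}
    (h : ∀ s, MeasurableSet s → |∫ x in s, b x ∂ν| ≤ c * ν.real s) : ∀ᵐ x ∂ν, ‖b x‖ ≤ c := by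
  have hconst (s : Set α) : ∫ _ in s, c ∂ν = c * ν.real s := by
    rw [setIntegral_const, smul_eq_mul, mul_comm]
  have hle := ae_le_of_forall_setIntegral_le hb (integrable_const c) fun s hs _ =>
    (le_abs_self _).trans ((h s hs).trans_eq (hconst s).symm)
  have hge := ae_le_of_forall_setIntegral_le hb.neg (integrable_const c) fun s hs _ => by
    simpa only [Pi.neg_apply, integral_neg, hconst] using (neg_le_abs _).trans (h s hs)
  filter_upwards [hle, hge] with x hx hx' using abs_le'.2 ⟨hx, hx'⟩

lemma coe_simpleFunc_indicatorConst_eq_smul {s : Set α} (hs : MeasurableSet s) (hνs : ν s ≠ ∞)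
    (c : ℝ) : (Lp.simpleFunc.indicatorConst 1 hs hνs c : Lp ℝ 1 ν) =
      c • indicatorConstLp 1 hs (measure_ne_top ν s) 1 := by
  rw [Lp.simpleFunc.coe_indicatorConst]
  refine Lp.ext ?_
  filter_upwards [indicatorConstLp_coeFn (p := 1) (hs := hs) (hμs := hνs) (c := c),
    Lp.coeFn_smul c (indicatorConstLp 1 hs (measure_ne_top ν s) (1 : ℝ)),
    indicatorConstLp_coeFn (p := 1) (hs := hs) (hμs := hνs) (c := (1 : ℝ))]
    with x hx hcx hx₁
  rw [hx, hcx, Pi.smul_apply, hx₁]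
  by_cases hxs : x ∈ s <;> simp [hxs]

theorem exists_linftyPairing_eq (ℓ : Lp ℝ 1 ν →L[ℝ] ℝ) : ∃ φ : Lp ℝ ∞ ν, linftyPairing φ = ℓ := by
  obtain ⟨b, hb⟩ := exists_forall_indicator_eq_setIntegral ℓ
  have hbound : ∀ᵐ x ∂ν, ‖b x‖ ≤ ‖ℓ‖ := by
    refine ae_norm_le_of_abs_setIntegral_le ((Lp.memLp b).integrable one_le_two) fun s hs => ?_
    rw [← hb s hs]
    refine (ℓ.le_opNorm _).trans_eq ?_
    simp [norm_indicatorConstLp one_ne_zero one_ne_top]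
  have hmem : MemLp b ∞ ν := memLp_top_of_bound (Lp.aestronglyMeasurable b) ‖ℓ‖ hbound
  refine ⟨hmem.toLp, ContinuousLinearMap.ext fun f => ?_⟩
  induction f using Lp.induction one_ne_top with
  | @indicatorConst c s hs hνs =>
    rw [coe_simpleFunc_indicatorConst_eq_smul, map_smul, map_smul, hb, linftyPairing_apply,
      ← integral_indicator hs]
    congr 1
    refine integral_congr_ae ?_
    filter_upwards [hmem.coeFn_toLp, indicatorConstLp_coeFn (p := 1) (hs := hs)
      (hμs := measure_ne_top ν s) (c := (1 : ℝ))] with x hx hxs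
    rw [hx, hxs]
    by_cases hmx : x ∈ s <;> simp [hmx]
  | @add f g hf hg _ hf' hg' => rw [map_add, map_add, hf', hg']
  | isClosed => exact isClosed_eq (ContinuousLinearMap.continuous _) ℓ.continuous

lemma const_one_nonneg : (0 : Lp ℝ 1 ν) ≤ Lp.const 1 ν 1 := by
  rw [← Lp.coeFn_nonneg]
  filter_upwards [Lp.coeFn_const 1 ν (1 : ℝ)] with x hx
  rw [hx]
  exact zero_le_one

lemma StrictlyPositive.ae_pos_of_linftyPairing {φ : Lp ℝ ∞ ν}
    (hφ : StrictlyPositive (linftyPairing φ)) : ∀ᵐ x ∂ν, 0 < φ x := by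
  have hs : MeasurableSet {x | φ x ≤ 0} := measurableSet_le (Lp.stronglyMeasurable φ).measurable
    measurable_const
  simp_rw [ae_iff, not_lt]
  by_contra hν
  set f : Lp ℝ 1 ν := indicatorConstLp 1 hs (measure_ne_top ν _) 1 with hf
  have hfind : f =ᵐ[ν] {x | φ x ≤ 0}.indicator fun _ => 1 := indicatorConstLp_coeFn
  have hf₀ : 0 ≤ f := by
    rw [← Lp.coeFn_nonneg]
    filter_upwards [hfind] with x hx
    rw [hx]
    exact Set.indicator_nonneg (fun _ _ => zero_le_one) x
  have hfne : f ≠ 0 := by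
    rw [← norm_ne_zero_iff, hf, norm_indicatorConstLp one_ne_zero one_ne_top]
    simpa [measureReal_eq_zero_iff] using hν
  refine (hφ hf₀ hfne).not_ge ?_
  rw [linftyPairing_apply]
  refine integral_nonpos_of_ae ?_
  filter_upwards [hfind] with x hx
  rw [hx]
  by_cases hxs : φ x ≤ 0 <;> simp [Set.indicator, hxs]

lemma exists_measureReal_lt_le {b : α → ℝ} (hb : Measurable b) (hb₀ : ∀ᵐ x ∂ν, 0 < b x) {ε : ℝ}
    (hε : 0 < ε) : ∃ s, 0 < s ∧ ν.real {x | b x < s} ≤ ε := by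
  have hinter : ν (⋂ s > (0 : ℝ), {x | b x < s}) = 0 := by
    refine measure_mono_null (fun x hx => ?_) (ae_iff.1 hb₀)
    exact (not_lt.2 (le_of_forall_gt fun s hs => Set.mem_iInter₂.1 hx s hs))
  have hlim := tendsto_measure_biInter_gt (μ := ν) (s := fun s => {x | b x < s}) (a := 0)
    (fun s _ => (measurableSet_lt hb measurable_const).nullMeasurableSet)
    (fun s t _ hst x (hx : b x < s) => hx.trans_le hst) ⟨1, one_pos, measure_ne_top _ _⟩
  rw [hinter] at hlim
  obtain ⟨s, hs, hs₀⟩ := ((hlim.eventually_le_const (ENNReal.ofReal_pos.2 hε)).and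
    self_mem_nhdsWithin).exists
  exact ⟨s, hs₀, ENNReal.toReal_le_of_le_ofReal hε.le hs⟩

lemma le_ite_add_inv_mul_add {b h r s t : ℝ} (hs : 0 < s) (hb : 0 ≤ b) (hh : 0 ≤ h) (hr : 0 ≤ r)
    (hle : h ≤ t + r) : h ≤ (if b < s then t else 0) + s⁻¹ * (b * h) + r := by
  have hbh : 0 ≤ s⁻¹ * (b * h) := by positivity
  split_ifs with hbs
  · linarith
  · have : h ≤ s⁻¹ * (b * h) := by
      rw [inv_mul_eq_div, le_div_iff₀' hs]
      exact mul_le_mul_of_nonneg_right (not_lt.1 hbs) hh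
    linarith

lemma norm_le_measureReal_mul_add_linftyPairing {b : Lp ℝ ∞ ν} (hb : ∀ᵐ x ∂ν, 0 < b x) {s : ℝ}
    (hs : 0 < s) {h r : Lp ℝ 1 ν} {t : ℝ} (hh : 0 ≤ h) (hr : 0 ≤ r)
    (hle : h ≤ t • Lp.const 1 ν 1 + r) :
    ‖h‖ ≤ ν.real {x | b x < s} * t + s⁻¹ * linftyPairing b h + ‖r‖ := by
  have hsm : MeasurableSet {x | b x < s} :=
    measurableSet_lt (Lp.stronglyMeasurable b).measurable measurable_const
  have hint₁ : Integrable ({x | b x < s}.indicator fun _ => t) ν :=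
    (integrable_const t).indicator hsm
  have hint₂ : Integrable (fun x => s⁻¹ * (b x * h x)) ν :=
    (integrable_linfty_mul_L1 b h).const_mul _
  have hint : Integrable
      (fun x => {x | b x < s}.indicator (fun _ => t) x + s⁻¹ * (b x * h x)) ν := hint₁.add hint₂
  have hpointwise : ∀ᵐ x ∂ν,
      h x ≤ {x | b x < s}.indicator (fun _ => t) x + s⁻¹ * (b x * h x) + r x := by
    filter_upwards [(Lp.coeFn_le _ _).2 hle, Lp.coeFn_add (t • Lp.const 1 ν (1 : ℝ)) r,
      Lp.coeFn_smul t (Lp.const 1 ν (1 : ℝ)), Lp.coeFn_const 1 ν (1 : ℝ), hb,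
      (Lp.coeFn_nonneg h).2 hh, (Lp.coeFn_nonneg r).2 hr] with x hle hadd hsmul hconst hb hh hr
    rw [hadd, Pi.add_apply, hsmul, Pi.smul_apply, hconst, Function.const_apply, smul_eq_mul,
      mul_one] at hle
    simpa [Set.indicator_apply] using le_ite_add_inv_mul_add hs hb.le hh hr hle
  calc ‖h‖ = ∫ x, h x ∂ν := norm_eq_integral_of_nonneg hh
    _ ≤ ∫ x, {x | b x < s}.indicator (fun _ => t) x + s⁻¹ * (b x * h x) + r x ∂ν :=
      integral_mono_ae (L1.integrable_coeFn h)
        (hint.add (L1.integrable_coeFn r)) hpointwise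
    _ = ν.real {x | b x < s} * t + s⁻¹ * linftyPairing b h + ‖r‖ := by
      rw [integral_add hint (L1.integrable_coeFn r), integral_add hint₁ hint₂,
        integral_indicator_const t hsm, integral_const_mul, linftyPairing_apply,
        norm_eq_integral_of_nonneg hr, smul_eq_mul]

lemma StrictlyPositive.exists_norm_le_of_le_smul_add {Ψ : Lp ℝ 1 ν →L[ℝ] ℝ}
    (hΨ : StrictlyPositive Ψ) {ε : ℝ} (hε : 0 < ε) :
    ∃ C, 0 < C ∧ ∀ (h r : Lp ℝ 1 ν) (t : ℝ), 0 ≤ h → 0 ≤ r → 0 ≤ t →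
      h ≤ t • Lp.const 1 ν 1 + r → ‖h‖ ≤ ε * t + C * Ψ h + ‖r‖ := by
  obtain ⟨b, rfl⟩ := exists_linftyPairing_eq Ψ
  have hb := hΨ.ae_pos_of_linftyPairing
  obtain ⟨s, hs₀, hs⟩ := exists_measureReal_lt_le (Lp.stronglyMeasurable b).measurable hb hε
  refine ⟨s⁻¹, inv_pos.2 hs₀, fun h r t hh hr ht hle => ?_⟩
  grw [norm_le_measureReal_mul_add_linftyPairing hb hs₀ hh hr hle, hs]

lemma AlmostDominated.exists_lyapunov {P : Lp ℝ 1 ν →L[ℝ] Lp ℝ 1 ν} {γ : ℝ}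
    (hdom : AlmostDominated P (Lp.const 1 ν 1) γ) (hP : Monotone P) (hγ : γ < 1)
    {Φ : Lp ℝ 1 ν →L[ℝ] ℝ} (hΦ : StrictlyPositive Φ) (hΦP : ∀ f, Φ (P f) = Φ f) :
    ∃ γ', γ' < 1 ∧ γ ≤ γ' ∧ ∃ C, 0 < C ∧ ∀ f, 0 ≤ f → ‖P f‖ ≤ γ' * ‖f‖ + C * Φ f := by
  obtain ⟨M, hM, hdom⟩ := hdom
  have : 0 < 1 - γ := sub_pos.2 hγ
  obtain ⟨C, hC, hinterp⟩ := hΦ.exists_norm_le_of_le_smul_add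
    (ε := (1 - γ) / (2 * (M + 1))) (by positivity)
  have hεM : (1 - γ) / (2 * (M + 1)) * M ≤ (1 - γ) / 2 := by
    rw [div_mul_eq_mul_div, div_le_div_iff₀ (by positivity) two_pos]
    nlinarith
  refine ⟨(1 + γ) / 2, by linarith, by linarith, C, hC, fun f hf => ?_⟩
  obtain ⟨r, hr, hle, hrγ⟩ := hdom f hf
  have hPf : 0 ≤ P f := map_zero P ▸ hP hf
  calc ‖P f‖ ≤ (1 - γ) / (2 * (M + 1)) * (M * ‖f‖) + C * Φ (P f) + ‖r‖ :=
        hinterp (P f) r _ hPf hr (by positivity) hle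
    _ ≤ (1 - γ) / 2 * ‖f‖ + C * Φ f + γ * ‖f‖ := by rw [← mul_assoc, hΦP]; gcongr
    _ = (1 + γ) / 2 * ‖f‖ + C * Φ f := by ring

lemma AlmostDominated.exists_mul_le_apply_pow {P : Lp ℝ 1 ν →L[ℝ] Lp ℝ 1 ν} {γ : ℝ}
    (hdom : AlmostDominated P (Lp.const 1 ν 1) γ) (hP : Monotone P)
    (hP₁ : P (Lp.const 1 ν 1) = Lp.const 1 ν 1) (hγ₀ : 0 ≤ γ) (hγ : γ < 1)
    {Φ : Lp ℝ 1 ν →L[ℝ] ℝ} (hΦP : ∀ f, Φ (P f) = Φ f)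
    {Ψ : Lp ℝ 1 ν →L[ℝ] ℝ} (hΨ : StrictlyPositive Ψ) {R : ℝ} (hR : 0 < R) :
    ∃ m, ∃ β, 0 < β ∧ ∀ f, 0 ≤ f → ‖f‖ ≤ R * Φ f → β * Φ f ≤ Ψ ((P ^ m) f) := by
  set δ := (4 * (‖Φ‖ + 1))⁻¹ with hδ
  have hδ₀ : 0 < δ := by positivity
  obtain ⟨m, hm⟩ := exists_pow_lt_of_lt_one (by positivity : 0 < δ / R) hγ
  obtain ⟨M, hM, hdom⟩ := hdom.pow hP const_one_nonneg hP₁ hγ₀ m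
  obtain ⟨C, hC, hinterp⟩ := hΨ.exists_norm_le_of_le_smul_add
    (ε := δ / (R * (M + 1))) (by positivity)
  have hεM : δ / (R * (M + 1)) * M ≤ δ / R := by
    rw [div_mul_eq_mul_div, div_le_div_iff₀ (by positivity) hR]
    nlinarith [mul_pos hδ₀ hR]
  refine ⟨m, 2 * δ / C, by positivity, fun f hf hfR => ?_⟩
  obtain ⟨r, hr, hle, hrγ⟩ := hdom f hf
  have hPf : 0 ≤ (P ^ m) f := map_zero (P ^ m) ▸ monotone_pow hP m hf
  have hupper : ‖(P ^ m) f‖ ≤ 2 * δ * Φ f + C * Ψ ((P ^ m) f) := by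
    calc ‖(P ^ m) f‖ ≤ δ / (R * (M + 1)) * (M * ‖f‖) + C * Ψ ((P ^ m) f) + ‖r‖ :=
          hinterp _ r _ hPf hr (by positivity) hle
      _ ≤ δ / R * (R * Φ f) + C * Ψ ((P ^ m) f) + δ / R * (R * Φ f) := by
        rw [← mul_assoc]; gcongr; exact hrγ.trans (by gcongr)
      _ = 2 * δ * Φ f + C * Ψ ((P ^ m) f) := by field_simp; ring
  have hlower : 4 * δ * Φ f ≤ ‖(P ^ m) f‖ := by
    rw [hδ, mul_inv, mul_inv_cancel_left₀ four_ne_zero, inv_mul_le_iff₀ (by positivity)]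
    calc Φ f = Φ ((P ^ m) f) := (apply_pow_apply_of_apply_apply hΦP m f).symm
      _ ≤ ‖Φ‖ * ‖(P ^ m) f‖ := (le_abs_self _).trans (Φ.le_opNorm _)
      _ ≤ (‖Φ‖ + 1) * ‖(P ^ m) f‖ := by gcongr; linarith
  rw [div_mul_eq_mul_div, div_le_iff₀ hC]
  linarith

end FiniteMeasure

section Huber

/-- The Huber function: the convex primitive `t²/2` of `t`, continued by an affine function with
slope `M` beyond `t = M`. -/
noncomputable def huber (M t : ℝ) : ℝ := min t M * t - min t M ^ 2 / 2

@[fun_prop]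
lemma continuous_huber (M : ℝ) : Continuous (huber M) := by
  unfold huber
  fun_prop

lemma huber_nonneg {M t : ℝ} (hM : 0 ≤ M) (ht : 0 ≤ t) : 0 ≤ huber M t := by
  unfold huber
  nlinarith [min_le_left t M, le_min ht hM]

lemma huber_le_mul {M t : ℝ} (ht : 0 ≤ t) : huber M t ≤ M * t := by
  unfold huber
  nlinarith [min_le_right t M, sq_nonneg (min t M)]

/-- The Bregman divergence of the Huber function controls the truncations, not the full difference
`t - s`. -/
lemma huber_add_mul_sub_add_sq_le (M s t : ℝ) :
    huber M s + min s M * (t - s) + (min t M - min s M) ^ 2 / 2 ≤ huber M t := by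
  unfold huber
  obtain hs | hs := min_cases s M <;> obtain ht | ht := min_cases t M <;>
    rw [hs.1, ht.1] <;> nlinarith

variable {α : Type*} [MeasurableSpace α] {μ : Measure α}

lemma integrable_huber {M : ℝ} (hM : 0 ≤ M) {u : Lp ℝ 1 μ} (hu : 0 ≤ u) :
    Integrable (fun x => huber M (u x)) μ := by
  refine ((L1.integrable_coeFn u).const_mul M).mono'
    ((continuous_huber M).comp_aestronglyMeasurable (Lp.aestronglyMeasurable u)) ?_
  filter_upwards [(Lp.coeFn_nonneg u).2 hu] with x hx
  rw [Real.norm_of_nonneg (huber_nonneg hM hx)]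
  exact huber_le_mul hx

lemma integral_huber_le {M : ℝ} (hM : 0 ≤ M) {u : Lp ℝ 1 μ} (hu : 0 ≤ u) :
    ∫ x, huber M (u x) ∂μ ≤ M * ‖u‖ := by
  rw [norm_eq_integral_of_nonneg hu, ← integral_const_mul]
  refine integral_mono_ae (integrable_huber hM hu) ((L1.integrable_coeFn u).const_mul M) ?_
  filter_upwards [(Lp.coeFn_nonneg u).2 hu] with x hx using huber_le_mul hx

end Huber

section FiniteMeasure

variable {α : Type*} [MeasurableSpace α] {ν : Measure α} [IsFiniteMeasure ν]

lemma coeFn_inf_smul_const_one (u : Lp ℝ 1 ν) (M : ℝ) :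
    ⇑(u ⊓ M • Lp.const 1 ν 1) =ᵐ[ν] fun x => min (u x) M := by
  filter_upwards [Lp.coeFn_inf u (M • Lp.const 1 ν 1), Lp.coeFn_smul M (Lp.const 1 ν (1 : ℝ)),
    Lp.coeFn_const 1 ν (1 : ℝ)] with x hinf hsmul hconst
  rw [hinf, Pi.inf_apply, hsmul, Pi.smul_apply, hconst, Function.const_apply, smul_eq_mul, mul_one]

lemma norm_min_le_of_nonneg {M t : ℝ} (hM : 0 ≤ M) (ht : 0 ≤ t) : ‖min t M‖ ≤ M := by
  rw [Real.norm_of_nonneg (le_min ht hM)]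
  exact min_le_right t M

lemma memLp_top_inf_smul_const_one {M : ℝ} (hM : 0 ≤ M) {u : Lp ℝ 1 ν} (hu : 0 ≤ u) :
    MemLp (u ⊓ M • Lp.const 1 ν 1 : Lp ℝ 1 ν) ∞ ν := by
  refine memLp_top_of_bound (Lp.aestronglyMeasurable _) M ?_
  filter_upwards [coeFn_inf_smul_const_one u M, (Lp.coeFn_nonneg u).2 hu] with x hx hux
  rw [hx]
  exact norm_min_le_of_nonneg hM hux

lemma integrable_sq_inf_sub_inf {M : ℝ} (hM : 0 ≤ M) {u v : Lp ℝ 1 ν} (hu : 0 ≤ u)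
    (hv : 0 ≤ v) :
    Integrable (fun x => (u ⊓ M • Lp.const 1 ν 1 - v ⊓ M • Lp.const 1 ν 1 : Lp ℝ 1 ν) x ^ 2) ν :=
  (((memLp_top_inf_smul_const_one hM hu).sub (memLp_top_inf_smul_const_one hM hv)).mono_exponent
    le_top |>.ae_eq (Lp.coeFn_sub _ _).symm).integrable_sq

lemma exists_integral_huber_add_le {M : ℝ} (hM : 0 ≤ M) {v : Lp ℝ 1 ν} (hv : 0 ≤ v) :
    ∃ ℓ : Lp ℝ 1 ν →L[ℝ] ℝ, ∀ u, 0 ≤ u →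
      ∫ x, huber M (v x) ∂ν + ℓ (u - v) +
        (∫ x, (u ⊓ M • Lp.const 1 ν 1 - v ⊓ M • Lp.const 1 ν 1 : Lp ℝ 1 ν) x ^ 2 ∂ν) / 2 ≤
      ∫ x, huber M (u x) ∂ν := by
  set φ : Lp ℝ ∞ ν := (memLp_top_inf_smul_const_one hM hv).toLp
  have hφ : φ =ᵐ[ν] fun x => min (v x) M :=
    (MemLp.coeFn_toLp _).trans (coeFn_inf_smul_const_one v M)
  refine ⟨linftyPairing φ, fun u hu => ?_⟩
  have hpair : Integrable (fun x => huber M (v x) + φ x * (u - v) x) ν :=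
    (integrable_huber hM hv).add (integrable_linfty_mul_L1 φ (u - v))
  have hsq := (integrable_sq_inf_sub_inf hM hu hv).div_const 2
  rw [linftyPairing_apply, ← integral_div,
    ← integral_add (integrable_huber hM hv) (integrable_linfty_mul_L1 φ (u - v)),
    ← integral_add hpair hsq]
  refine integral_mono_ae (hpair.add hsq) (integrable_huber hM hu) ?_
  filter_upwards [hφ, Lp.coeFn_sub u v,
    Lp.coeFn_sub (u ⊓ M • Lp.const 1 ν 1) (v ⊓ M • Lp.const 1 ν 1),
    coeFn_inf_smul_const_one u M, coeFn_inf_smul_const_one v M] with x hφ hsub hsub' hu hv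
  simp only [hφ, hsub, hsub', Pi.sub_apply, hu, hv]
  exact huber_add_mul_sub_add_sq_le M (v x) (u x)

lemma norm_le_of_integral_sq_le {w : Lp ℝ 1 ν} (hw : Integrable (fun x => w x ^ 2) ν) {a : ℝ}
    (ha : 0 < a) : ‖w‖ ≤ (a * ν.real Set.univ + a⁻¹ * ∫ x, w x ^ 2 ∂ν) / 2 := by
  have hint : Integrable (fun x => (a + a⁻¹ * w x ^ 2) / 2) ν :=
    ((integrable_const a).add (hw.const_mul a⁻¹)).div_const 2
  calc ‖w‖ = ∫ x, ‖w x‖ ∂ν := L1.norm_eq_integral_norm w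
    _ ≤ ∫ x, (a + a⁻¹ * w x ^ 2) / 2 ∂ν := by
      refine integral_mono (L1.integrable_coeFn w).norm hint fun x => ?_
      have hsq := mul_nonneg (inv_nonneg.2 ha.le) (sq_nonneg (a - |w x|))
      have hexpand : a⁻¹ * (a - |w x|) ^ 2 = a - 2 * |w x| + a⁻¹ * w x ^ 2 := by
        rw [sub_sq, sq_abs]
        field_simp
      rw [Real.norm_eq_abs]
      linarith
    _ = _ := by
      rw [integral_div, integral_add (integrable_const a) (hw.const_mul a⁻¹), integral_const_mul,
        integral_const, smul_eq_mul, mul_comm a]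

/-- The slice is cut near a maximiser of `∫ huber M u`, which is uniformly convex in the truncations
of `u` at level `M`. -/
lemma exists_slice_norm_inf_sub_inf_le {D : Set (Lp ℝ 1 ν)} (hD : D.Nonempty)
    (hD₀ : ∀ u ∈ D, 0 ≤ u) {B : ℝ} (hDB : ∀ u ∈ D, ‖u‖ ≤ B) {M η : ℝ} (hM : 0 ≤ M) (hη : 0 < η) :
    ∃ v ∈ D, ∃ ℓ : Lp ℝ 1 ν →L[ℝ] ℝ, ∃ κ, 0 < κ ∧ ∀ u ∈ D, ℓ v - κ ≤ ℓ u →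
      ‖u ⊓ M • Lp.const 1 ν 1 - v ⊓ M • Lp.const 1 ν 1‖ ≤ η := by
  set F : Lp ℝ 1 ν → ℝ := fun u => ∫ x, huber M (u x) ∂ν
  set a := η / (ν.real Set.univ + 1) with ha
  have ha₀ : 0 < a := by positivity
  have haν : a * ν.real Set.univ ≤ η := by
    rw [ha, div_mul_eq_mul_div, div_le_iff₀ (by positivity)]
    nlinarith
  have hbdd : BddAbove (F '' D) := by
    refine ⟨M * B, ?_⟩
    rintro _ ⟨u, hu, rfl⟩
    exact (integral_huber_le hM (hD₀ u hu)).trans (by gcongr; exact hDB u hu)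
  set κ := a * η / 4 with hκ
  obtain ⟨_, ⟨v, hv, rfl⟩, hvmax⟩ := exists_lt_of_lt_csSup (hD.image F)
    (sub_lt_self _ (by positivity : 0 < κ))
  obtain ⟨ℓ, hℓ⟩ := exists_integral_huber_add_le hM (hD₀ v hv)
  refine ⟨v, hv, ℓ, κ, by positivity, fun u hu hslice => ?_⟩
  have huF : F u ≤ sSup (F '' D) := le_csSup hbdd (Set.mem_image_of_mem F hu)
  have hconvex := hℓ u (hD₀ u hu)
  rw [map_sub] at hconvex
  calc ‖u ⊓ M • Lp.const 1 ν 1 - v ⊓ M • Lp.const 1 ν 1‖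
      ≤ (a * ν.real Set.univ + a⁻¹ * ∫ x, (u ⊓ M • Lp.const 1 ν 1 -
          v ⊓ M • Lp.const 1 ν 1 : Lp ℝ 1 ν) x ^ 2 ∂ν) / 2 :=
        norm_le_of_integral_sq_le (integrable_sq_inf_sub_inf hM (hD₀ u hu) (hD₀ v hv)) ha₀
    _ ≤ (η + a⁻¹ * (4 * κ)) / 2 := by gcongr; linarith
    _ = η := by rw [hκ]; field_simp; ring

lemma exists_set_forall_sub_mul_norm_le {s : Set α} (hs : MeasurableSet s) (ℓ : Lp ℝ 1 ν →L[ℝ] ℝ)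
    {f : Lp ℝ 1 ν} (hf : 0 ≤ f) (hf₁ : ‖f‖ = 1) (hfs : ∀ᵐ x ∂ν, x ∉ s → f x = 0) {κ : ℝ}
    (hκ : 0 < κ) :
    ∃ t ⊆ s, MeasurableSet t ∧ ν t ≠ 0 ∧ ∀ g, 0 ≤ g → (∀ᵐ x ∂ν, x ∉ t → g x = 0) →
      (ℓ f - κ) * ‖g‖ ≤ ℓ g := by
  obtain ⟨b, rfl⟩ := exists_linftyPairing_eq ℓ
  set c := linftyPairing b f - κ
  have ht : MeasurableSet (s ∩ {x | c ≤ b x}) :=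
    hs.inter (measurableSet_le measurable_const (Lp.stronglyMeasurable b).measurable)
  refine ⟨s ∩ {x | c ≤ b x}, Set.inter_subset_left, ht, fun hnull => ?_, fun g hg hgs => ?_⟩
  · have hle : linftyPairing b f ≤ c * ‖f‖ := by
      rw [linftyPairing_apply, norm_eq_integral_of_nonneg hf, ← integral_const_mul]
      refine integral_mono_ae (integrable_linfty_mul_L1 b f)
        ((L1.integrable_coeFn f).const_mul c) ?_
      filter_upwards [measure_eq_zero_iff_ae_notMem.1 hnull, hfs, (Lp.coeFn_nonneg f).2 hf]
        with x hx hxs hfx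
      by_cases hmem : x ∈ s
      · exact mul_le_mul_of_nonneg_right (not_le.1 fun h => hx ⟨hmem, h⟩).le hfx
      · simp [hxs hmem]
    rw [hf₁, mul_one] at hle
    linarith
  · rw [linftyPairing_apply, norm_eq_integral_of_nonneg hg, ← integral_const_mul]
    refine integral_mono_ae ((L1.integrable_coeFn g).const_mul c)
      (integrable_linfty_mul_L1 b g) ?_
    filter_upwards [hgs, (Lp.coeFn_nonneg g).2 hg] with x hx hgx
    by_cases hmem : x ∈ s ∩ {x | c ≤ b x}
    · exact mul_le_mul_of_nonneg_right hmem.2 hgx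
    · simp [hx hmem]

end FiniteMeasure

section NormedLattice

variable {E : Type*} [NormedAddCommGroup E] [NormedSpace ℝ E] [Lattice E]

lemma mul_apply_inf_le_of_smul_le [PosSMulMono ℝ E] {Q : E →L[ℝ] E} (hQ : Monotone Q)
    {Φ : E →L[ℝ] ℝ} (hΦ : Monotone Φ) {t : ℝ} (ht : 0 ≤ t) {f g z w : E} (hf : t • f ≤ z)
    (hg : t • g ≤ w) : t * Φ (Q f ⊓ Q g) ≤ Φ (Q z ⊓ Q w) := by
  rw [← smul_eq_mul, ← map_smul]
  refine hΦ (le_inf ?_ ?_)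
  · grw [inf_le_left, ← map_smul]
    exact hQ hf
  · grw [inf_le_right, ← map_smul]
    exact hQ hg

lemma normalize_nonneg_norm_eq_one_smul_le [IsOrderedAddMonoid E] [IsOrderedModule ℝ E] {z : E}
    (hz : 0 ≤ z) {t : ℝ} (ht : 0 < t) (htz : t ≤ ‖z‖) :
    0 ≤ ‖z‖⁻¹ • z ∧ ‖‖z‖⁻¹ • z‖ = 1 ∧ t • ‖z‖⁻¹ • z ≤ z := by
  have hz₀ : ‖z‖ ≠ 0 := (ht.trans_le htz).ne'
  have hz' : 0 ≤ ‖z‖⁻¹ • z := smul_nonneg (by positivity) hz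
  refine ⟨hz', norm_smul_inv_norm (𝕜 := ℝ) (norm_ne_zero_iff.1 hz₀), ?_⟩
  exact (smul_le_smul_of_nonneg_right htz hz').trans_eq (smul_inv_smul₀ hz₀ z)

variable [IsOrderedAddMonoid E] [HasSolidNorm E]

lemma AlmostDominated.exists_norm_sub_inf_le {P : E →L[ℝ] E} {e : E} {γ : ℝ}
    (h : AlmostDominated P e γ) :
    ∃ M, 0 ≤ M ∧ ∀ f, 0 ≤ f → ‖P f - P f ⊓ (M * ‖f‖) • e‖ ≤ γ * ‖f‖ := by
  obtain ⟨M, hM, h⟩ := h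
  refine ⟨M, hM, fun f hf => ?_⟩
  obtain ⟨r, hr, hle, hrγ⟩ := h f hf
  have hsub : P f - P f ⊓ (M * ‖f‖) • e ≤ r := sub_le_comm.1
    (le_inf (sub_le_self _ hr) (sub_le_iff_le_add.2 hle))
  exact (norm_le_norm_of_nonneg_of_le (sub_nonneg.2 inf_le_left) hsub).trans hrγ

lemma le_apply_inf_of_norm_sub_inf_le {Φ : E →L[ℝ] ℝ} (hΦ : Monotone Φ) {u v w : E} {ρ ε δ : ℝ}
    (hu : ρ ≤ Φ u) (hv : ρ ≤ Φ v) (huw : ‖u - u ⊓ w‖ ≤ ε) (hvw : ‖v - v ⊓ w‖ ≤ ε)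
    (huv : ‖u ⊓ w - v ⊓ w‖ ≤ δ) : ρ - ‖Φ‖ * (ε + δ / 2) ≤ Φ (u ⊓ v) := by
  have hΦle (f : E) : Φ f ≤ ‖Φ‖ * ‖f‖ := (le_abs_self _).trans (Φ.le_opNorm f)
  have htrunc {u : E} (hu : ρ ≤ Φ u) (huw : ‖u - u ⊓ w‖ ≤ ε) : ρ - ‖Φ‖ * ε ≤ Φ (u ⊓ w) := by
    have := (hΦle (u - u ⊓ w)).trans (mul_le_mul_of_nonneg_left huw (norm_nonneg Φ))
    rw [map_sub] at this
    linarith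
  have habs : Φ |u ⊓ w - v ⊓ w| ≤ ‖Φ‖ * δ := by
    grw [hΦle, norm_abs_eq_norm, huv]
  have hmono : Φ ((u ⊓ w) ⊓ (v ⊓ w)) ≤ Φ (u ⊓ v) := hΦ (inf_le_inf inf_le_left inf_le_left)
  linarith [apply_abs_sub_eq Φ (u ⊓ w) (v ⊓ w), htrunc hu huw, htrunc hv hvw]

end NormedLattice

section FiniteMeasure

variable {α : Type*} [MeasurableSpace α] {ν : Measure α} [IsFiniteMeasure ν]

lemma exists_norm_eq_one_of_measure_ne_zero {s : Set α} (hs : MeasurableSet s) (hνs : ν s ≠ 0) :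
    ∃ f : Lp ℝ 1 ν, 0 ≤ f ∧ ‖f‖ = 1 ∧ ∀ᵐ x ∂ν, x ∉ s → f x = 0 := by
  obtain ⟨g, hg, -, hgs, hnorm⟩ := exists_restriction_of_nonneg hs (const_one_nonneg (ν := ν))
  have hnorm_ne : ‖g‖ ≠ 0 := by
    rw [hnorm, integral_congr_ae (ae_restrict_of_ae (Lp.coeFn_const 1 ν (1 : ℝ)))]
    simpa [measureReal_eq_zero_iff] using hνs
  exact ⟨‖g‖⁻¹ • g, smul_nonneg (by positivity) hg,
    norm_smul_inv_norm (𝕜 := ℝ) (norm_ne_zero_iff.1 hnorm_ne), smul_ae_eq_zero_of_notMem hgs _⟩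

lemma StrictlyPositive.exists_set_forall_mul_norm_le [NeZero ν] {Φ : Lp ℝ 1 ν →L[ℝ] ℝ}
    (hΦ : StrictlyPositive Φ) :
    ∃ s, MeasurableSet s ∧ ν s ≠ 0 ∧ ∃ ρ, 0 < ρ ∧
      ∀ f, 0 ≤ f → (∀ᵐ x ∂ν, x ∉ s → f x = 0) → ρ * ‖f‖ ≤ Φ f := by
  obtain ⟨f, hf, hf₁, hfs⟩ := exists_norm_eq_one_of_measure_ne_zero (ν := ν) .univ
    (by simpa using NeZero.ne ν)
  have hpos : 0 < Φ f := hΦ hf (norm_ne_zero_iff.1 (hf₁ ▸ one_ne_zero))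
  obtain ⟨s, -, hs, hνs, hle⟩ := exists_set_forall_sub_mul_norm_le .univ Φ hf hf₁ hfs
    (half_pos hpos)
  exact ⟨s, hs, hνs, Φ f - Φ f / 2, by linarith, hle⟩

lemma exists_set_norm_apply_inf_sub_inf_le {P : Lp ℝ 1 ν →L[ℝ] Lp ℝ 1 ν} (hP : Monotone P)
    {s : Set α} (hs : MeasurableSet s) (hνs : ν s ≠ 0) {M η : ℝ} (hM : 0 ≤ M) (hη : 0 < η) :
    ∃ t ⊆ s, MeasurableSet t ∧ ν t ≠ 0 ∧ ∃ v, ∀ f, 0 ≤ f → ‖f‖ = 1 →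
      (∀ᵐ x ∂ν, x ∉ t → f x = 0) →
        ‖P f ⊓ M • Lp.const 1 ν 1 - v ⊓ M • Lp.const 1 ν 1‖ ≤ η := by
  set U := {f : Lp ℝ 1 ν | 0 ≤ f ∧ ‖f‖ = 1 ∧ ∀ᵐ x ∂ν, x ∉ s → f x = 0}
  have hUne : U.Nonempty := exists_norm_eq_one_of_measure_ne_zero hs hνs
  have hPU : ∀ u ∈ P '' U, 0 ≤ u := by
    rintro _ ⟨f, hf, rfl⟩
    exact map_zero P ▸ hP hf.1
  have hPUnorm : ∀ u ∈ P '' U, ‖u‖ ≤ ‖P‖ := by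
    rintro _ ⟨f, hf, rfl⟩
    exact P.unit_le_opNorm f hf.2.1.le
  obtain ⟨_, ⟨f₁, ⟨hf₁, hf₁norm, hf₁s⟩, rfl⟩, ℓ, κ, hκ, hslice⟩ :=
    exists_slice_norm_inf_sub_inf_le (hUne.image P) hPU hPUnorm hM hη
  obtain ⟨t, hts, ht, hνt, hle⟩ :=
    exists_set_forall_sub_mul_norm_le hs (ℓ.comp P) hf₁ hf₁norm hf₁s hκ
  refine ⟨t, hts, ht, hνt, P f₁, fun f hf hfnorm hft => hslice (P f) ⟨f, ⟨hf, hfnorm, ?_⟩, rfl⟩ ?_⟩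
  · exact hft.mono fun x hx hxs => hx fun hxt => hxs (hts hxt)
  · simpa [hfnorm] using hle f hf hft

lemma AlmostDominated.exists_set_le_apply_inf_of_norm_eq_one [NeZero ν]
    {P : Lp ℝ 1 ν →L[ℝ] Lp ℝ 1 ν} {γ : ℝ}
    (hdom : AlmostDominated P (Lp.const 1 ν 1) γ) (hP : Monotone P)
    (hP₁ : P (Lp.const 1 ν 1) = Lp.const 1 ν 1) (hγ₀ : 0 ≤ γ) (hγ : γ < 1)
    {Φ : Lp ℝ 1 ν →L[ℝ] ℝ} (hΦ : StrictlyPositive Φ) (hΦP : ∀ f, Φ (P f) = Φ f) :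
    ∃ q s, MeasurableSet s ∧ ν s ≠ 0 ∧ ∃ c, 0 < c ∧ ∀ f g, 0 ≤ f → 0 ≤ g → ‖f‖ = 1 → ‖g‖ = 1 →
      (∀ᵐ x ∂ν, x ∉ s → f x = 0) → (∀ᵐ x ∂ν, x ∉ s → g x = 0) →
        c ≤ Φ ((P ^ q) f ⊓ (P ^ q) g) := by
  obtain ⟨s₀, hs₀, hνs₀, ρ, hρ, hΦs₀⟩ := hΦ.exists_set_forall_mul_norm_le
  set η := ρ / (4 * (‖Φ‖ + 1)) with hη
  have hη₀ : 0 < η := by positivity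
  have hΦη : ‖Φ‖ * (2 * η) ≤ ρ / 2 := by
    rw [hη, ← mul_div_assoc, ← mul_div_assoc, div_le_div_iff₀ (by positivity) two_pos]
    nlinarith
  obtain ⟨q, hq⟩ := exists_pow_lt_of_lt_one hη₀ hγ
  obtain ⟨M, hM, htrunc⟩ := (hdom.pow hP const_one_nonneg hP₁ hγ₀ q).exists_norm_sub_inf_le
  obtain ⟨s, hss₀, hs, hνs, v, hv⟩ :=
    exists_set_norm_apply_inf_sub_inf_le (monotone_pow hP q) hs₀ hνs₀ hM hη₀
  refine ⟨q, s, hs, hνs, ρ / 2, half_pos hρ, fun f g hf hg hf₁ hg₁ hfs hgs => ?_⟩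
  have hmass {f : Lp ℝ 1 ν} (hf : 0 ≤ f) (hf₁ : ‖f‖ = 1) (hfs : ∀ᵐ x ∂ν, x ∉ s → f x = 0) :
      ρ ≤ Φ ((P ^ q) f) := by
    rw [apply_pow_apply_of_apply_apply hΦP]
    simpa [hf₁] using hΦs₀ f hf (hfs.mono fun x hx hxs => hx fun hxs' => hxs (hss₀ hxs'))
  have htrunc₁ {f : Lp ℝ 1 ν} (hf : 0 ≤ f) (hf₁ : ‖f‖ = 1) :
      ‖(P ^ q) f - (P ^ q) f ⊓ M • Lp.const 1 ν 1‖ ≤ η := by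
    simpa only [hf₁, mul_one] using (htrunc f hf).trans (by rw [hf₁, mul_one]; exact hq.le)
  have hclose := norm_sub_le_norm_sub_add_norm_sub ((P ^ q) f ⊓ M • Lp.const 1 ν 1)
    (v ⊓ M • Lp.const 1 ν 1) ((P ^ q) g ⊓ M • Lp.const 1 ν 1)
  rw [norm_sub_rev (v ⊓ _)] at hclose
  have := le_apply_inf_of_norm_sub_inf_le hΦ.monotone (hmass hf hf₁ hfs) (hmass hg hg₁ hgs)
    (htrunc₁ hf hf₁) (htrunc₁ hg hg₁)
    (hclose.trans (add_le_add (hv f hf hf₁ hfs) (hv g hg hg₁ hgs)))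
  linarith

lemma AlmostDominated.exists_set_mul_le_apply_inf [NeZero ν] {P : Lp ℝ 1 ν →L[ℝ] Lp ℝ 1 ν} {γ : ℝ}
    (hdom : AlmostDominated P (Lp.const 1 ν 1) γ) (hP : Monotone P)
    (hP₁ : P (Lp.const 1 ν 1) = Lp.const 1 ν 1) (hγ₀ : 0 ≤ γ) (hγ : γ < 1)
    {Φ : Lp ℝ 1 ν →L[ℝ] ℝ} (hΦ : StrictlyPositive Φ) (hΦP : ∀ f, Φ (P f) = Φ f) :
    ∃ q s, MeasurableSet s ∧ ν s ≠ 0 ∧ ∃ c, 0 < c ∧ ∀ t z w, 0 < t → 0 ≤ z → 0 ≤ w →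
      (∀ᵐ x ∂ν, x ∉ s → z x = 0) → (∀ᵐ x ∂ν, x ∉ s → w x = 0) → t ≤ ‖z‖ → t ≤ ‖w‖ →
        c * t ≤ Φ ((P ^ q) z ⊓ (P ^ q) w) := by
  obtain ⟨q, s, hs, hνs, c, hc, hunit⟩ :=
    hdom.exists_set_le_apply_inf_of_norm_eq_one hP hP₁ hγ₀ hγ hΦ hΦP
  refine ⟨q, s, hs, hνs, c, hc, fun t z w ht hz hw hzs hws htz htw => ?_⟩
  obtain ⟨hz', hz₁, hzt⟩ := normalize_nonneg_norm_eq_one_smul_le hz ht htz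
  obtain ⟨hw', hw₁, hwt⟩ := normalize_nonneg_norm_eq_one_smul_le hw ht htw
  calc c * t ≤ t * Φ ((P ^ q) (‖z‖⁻¹ • z) ⊓ (P ^ q) (‖w‖⁻¹ • w)) := by
        rw [mul_comm]
        gcongr
        exact hunit _ _ hz' hw' hz₁ hw₁ (smul_ae_eq_zero_of_notMem hzs _)
          (smul_ae_eq_zero_of_notMem hws _)
    _ ≤ Φ ((P ^ q) z ⊓ (P ^ q) w) :=
      mul_apply_inf_le_of_smul_le (monotone_pow hP q) hΦ.monotone ht.le hzt hwt

variable {P : Lp ℝ 1 ν →L[ℝ] Lp ℝ 1 ν} {γ : ℝ}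
  {Φ : Lp ℝ 1 ν →L[ℝ] ℝ}

lemma AlmostDominated.exists_overlap [NeZero ν] (hdom : AlmostDominated P (Lp.const 1 ν 1) γ)
    (hP : Monotone P) (hP₁ : P (Lp.const 1 ν 1) = Lp.const 1 ν 1)
    (hP₀ : ∀ f, 0 ≤ f → f ≠ 0 → ∀ᵐ x ∂ν, 0 < P f x) (hγ₀ : 0 ≤ γ) (hγ : γ < 1)
    (hΦ : StrictlyPositive Φ) (hΦP : ∀ f, Φ (P f) = Φ f) {R : ℝ} (hR : 0 < R) :
    ∃ n, n ≠ 0 ∧ ∃ c, 0 < c ∧ ∀ f g, 0 ≤ f → 0 ≤ g → Φ f = Φ g → ‖f‖ ≤ R * Φ f → ‖g‖ ≤ R * Φ g →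
      c * Φ f ≤ Φ ((P ^ n) f ⊓ (P ^ n) g) := by
  obtain ⟨q, s, hs, hνs, c, hc, hsmall⟩ :=
    hdom.exists_set_mul_le_apply_inf hP hP₁ hγ₀ hγ hΦ hΦP
  obtain ⟨m, β, hβ, hmass⟩ := hdom.exists_mul_le_apply_pow hP hP₁ hγ₀ hγ hΦP
    (strictlyPositive_setIntegralCLM_comp hP₀ hνs) hR
  have hnonneg (n : ℕ) {f : Lp ℝ 1 ν} (hf : 0 ≤ f) : 0 ≤ (P ^ n) f :=
    map_zero (P ^ n) ▸ monotone_pow hP n hf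
  refine ⟨q + (m + 1), by omega, c * β, by positivity, fun f g hf hg hfg hfR hgR => ?_⟩
  have hrestrict {f : Lp ℝ 1 ν} (hf : 0 ≤ f) (hfR : ‖f‖ ≤ R * Φ f) :
      ∃ z, 0 ≤ z ∧ z ≤ (P ^ (m + 1)) f ∧ (∀ᵐ x ∂ν, x ∉ s → z x = 0) ∧ β * Φ f ≤ ‖z‖ := by
    obtain ⟨z, hz, hle, hzs, hnorm⟩ := exists_restriction_of_nonneg hs (hnonneg (m + 1) hf)
    refine ⟨z, hz, hle, hzs, ?_⟩
    rw [hnorm, ← setIntegralCLM_apply, pow_succ']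
    exact hmass f hf hfR
  obtain ⟨z, hz, hzle, hzs, hzβ⟩ := hrestrict hf hfR
  obtain ⟨w, hw, hwle, hws, hwβ⟩ := hrestrict hg hgR
  obtain hΦf | hΦf := (hΦ.apply_nonneg hf).eq_or_lt
  · rw [← hΦf, mul_zero]
    exact hΦ.apply_nonneg (le_inf (hnonneg _ hf) (hnonneg _ hg))
  calc c * β * Φ f = c * (β * Φ f) := mul_assoc ..
    _ ≤ Φ ((P ^ q) z ⊓ (P ^ q) w) :=
      hsmall _ z w (by positivity) hz hw hzs hws hzβ (hfg ▸ hwβ)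
    _ ≤ Φ ((P ^ (q + (m + 1))) f ⊓ (P ^ (q + (m + 1))) g) := by
      rw [pow_add]
      exact hΦ.monotone (inf_le_inf (monotone_pow hP q hzle) (monotone_pow hP q hwle))

theorem AlmostDominated.exists_pow_norm_le_half_of_const_one
    (hdom : AlmostDominated P (Lp.const 1 ν 1) γ)
    (hP : Monotone P) (hP₁ : P (Lp.const 1 ν 1) = Lp.const 1 ν 1)
    (hP₀ : ∀ f, 0 ≤ f → f ≠ 0 → ∀ᵐ x ∂ν, 0 < P f x) (hγ₀ : 0 ≤ γ) (hγ : γ < 1)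
    (hΦ : StrictlyPositive Φ) (hΦP : ∀ f, Φ (P f) = Φ f) :
    ∃ n, ∀ g, Φ g = 0 → ‖(P ^ n) g‖ ≤ 1 / 2 * ‖g‖ := by
  obtain rfl | _ := eq_zero_or_neZero ν
  · exact ⟨0, fun g _ => by simp [Lp.norm_def]⟩
  obtain ⟨γ', hγ', hγγ', C, hC, hLyapunov⟩ := hdom.exists_lyapunov hP hγ hΦ hΦP
  have hγ'₀ : 0 ≤ γ' := hγ₀.trans hγγ'
  have hgap : 0 < 1 - γ' := sub_pos.2 hγ'
  set D := C / (1 - γ')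
  have hD₀ : 0 < D := by positivity
  set R := 2 * D / (1 - γ') with hR
  have hDR : D / R = (1 - γ') / 2 := by rw [hR]; field_simp
  obtain ⟨n, hn, c, hc, hoverlap⟩ :=
    hdom.exists_overlap hP hP₁ hP₀ hγ₀ hγ hΦ hΦP (R := 2 * R) (by positivity)
  have hLyapunov' (f : Lp ℝ 1 ν) (hf : 0 ≤ f) : ‖(P ^ n) f‖ ≤ γ' * ‖f‖ + D * Φ f := by
    grw [apply_pow_le_of_apply_le hP hΦ.monotone hΦP hγ'₀ hγ' hC.le hLyapunov n hf,
      pow_le_of_le_one hγ'₀ hγ'.le hn]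
  obtain ⟨j, hj⟩ := exists_pow_norm_le_half_of_lyapunov_of_overlap (monotone_pow hP n)
    hΦ.monotone (apply_pow_apply_of_apply_apply hΦP n) hγ'₀ hD₀.le (R := R) (by positivity)
    (by linarith) hc hLyapunov' hoverlap
  exact ⟨n * j, fun g hg => by rw [pow_mul]; exact hj g hg⟩

end FiniteMeasure

section WeakCompactness

variable {α : Type*} [MeasurableSpace α] {μ : Measure α}

lemma exists_setIntegral_lt_of_isCompact_weakSpace {C : Set (WeakSpace ℝ (Lp ℝ 1 μ))}
    (hC : IsCompact C) {s : ℕ → Set α} (hs : ∀ n, MeasurableSet (s n)) (hanti : Antitone s)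
    (hinter : μ (⋂ n, s n) = 0) {u : ℕ → Lp ℝ 1 μ} (hu : ∀ n, toWeakSpaceCLM ℝ _ (u n) ∈ C)
    {δ : ℝ} (hδ : 0 < δ) : ∃ m n, m ≤ n ∧ ∫ x in s m, u n x ∂μ < δ := by
  by_contra! hcon
  obtain ⟨v, -, hv⟩ := hC.exists_mapClusterPt (f := atTop)
    (u := fun n => toWeakSpaceCLM ℝ _ (u n)) (tendsto_principal.2 (.of_forall hu))
  set v' : Lp ℝ 1 μ := (toWeakSpace ℝ _).symm v
  have hle (m : ℕ) : δ ≤ ∫ x in s m, v' x ∂μ := by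
    have hcont : Continuous fun w : WeakSpace ℝ (Lp ℝ 1 μ) =>
        setIntegralCLM μ (s m) ((toWeakSpace ℝ _).symm w) :=
      WeakBilin.eval_continuous (topDualPairing ℝ (Lp ℝ 1 μ)).flip (setIntegralCLM μ (s m))
    rw [← setIntegralCLM_apply]
    refine (isClosed_le continuous_const hcont).mem_of_mapClusterPt hv ?_
    filter_upwards [eventually_ge_atTop m] with n hmn
    exact (hcon m n hmn).trans_eq (setIntegralCLM_apply _ _).symm
  have hlim := tendsto_setIntegral_of_antitone (μ := μ) (f := v') hs hanti
    ⟨0, (L1.integrable_coeFn v').integrableOn⟩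
  rw [setIntegral_measure_zero _ hinter] at hlim
  exact (ge_of_tendsto' hlim hle).not_gt hδ

lemma norm_posPart_sub_le_setIntegral {h u : Lp ℝ 1 μ} (hh : 0 ≤ h) (hu : 0 ≤ u) {s : Set α}
    (hs : MeasurableSet s) (hle : ∀ᵐ x ∂μ, x ∉ s → h x ≤ u x) :
    ‖(h - u)⁺‖ ≤ ∫ x in s, h x ∂μ := by
  rw [norm_eq_integral_of_nonneg (posPart_nonneg _), ← integral_indicator hs]
  refine integral_mono_ae (L1.integrable_coeFn _) ((L1.integrable_coeFn h).indicator hs) ?_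
  filter_upwards [Lp.coeFn_sup (h - u) 0, Lp.coeFn_zero ℝ 1 μ, Lp.coeFn_sub h u,
    (Lp.coeFn_nonneg h).2 hh, (Lp.coeFn_nonneg u).2 hu, hle] with x hx hzero hsub hh hu hle
  simp only [Pi.zero_apply] at hh hu
  rw [posPart_def, hx, Pi.sup_apply, hzero, Pi.zero_apply, hsub, Pi.sub_apply]
  by_cases hxs : x ∈ s
  · rw [Set.indicator_of_mem hxs]
    exact max_le (by linarith) hh
  · rw [Set.indicator_of_notMem hxs]
    exact max_le (by linarith [hle hxs]) le_rfl

/-- The sets are the superlevel sets of `∑' n, 2⁻ⁿ • u n` relative to `2ⁿ • e`. -/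
lemma exists_antitone_forall_notMem_le {e : α → ℝ} (he : Measurable e) (he₀ : ∀ᵐ x ∂μ, 0 < e x)
    {u : ℕ → Lp ℝ 1 μ} (hu : ∀ n, 0 ≤ u n) {L : ℝ} (huL : ∀ n, ‖u n‖ ≤ L) :
    ∃ s : ℕ → Set α, Antitone s ∧ (∀ n, MeasurableSet (s n)) ∧ μ (⋂ n, s n) = 0 ∧
      ∀ n, ∀ᵐ x ∂μ, x ∉ s n → u n x ≤ 4 ^ n * e x := by
  have hsum : Summable fun n => (1 / 2 : ℝ) ^ n • u n := by
    refine .of_norm_bounded (summable_geometric_two.mul_right L) fun n => ?_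
    rw [norm_smul, norm_pow, Real.norm_of_nonneg one_half_pos.le]
    gcongr
    exact huL n
  set g := ∑' n, (1 / 2 : ℝ) ^ n • u n
  have hle (n : ℕ) : (1 / 2 : ℝ) ^ n • u n ≤ g :=
    hsum.le_tsum n fun i _ => smul_nonneg (by positivity) (hu i)
  refine ⟨fun n => {x | 2 ^ n * |e x| ≤ g x}, ?_, fun n => ?_, ?_, fun n => ?_⟩
  · refine fun m n hmn x (hx : 2 ^ n * |e x| ≤ g x) => le_trans (b := 2 ^ n * |e x|) ?_ hx
    gcongr
    exact one_le_two
  · exact measurableSet_le (he.abs.const_mul _) (Lp.stronglyMeasurable g).measurable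
  · refine measure_mono_null (fun x hx => ?_) (ae_iff.1 he₀)
    intro hex
    obtain ⟨n, hn⟩ := pow_unbounded_of_one_lt (g x / e x) one_lt_two
    have hxn : 2 ^ n * |e x| ≤ g x := Set.mem_iInter.1 hx n
    rw [abs_of_pos hex, ← le_div_iff₀ hex] at hxn
    exact hxn.not_gt hn
  · filter_upwards [(Lp.coeFn_le _ _).2 (hle n), Lp.coeFn_smul ((1 / 2 : ℝ) ^ n) (u n), he₀]
      with x hgx hsmul hex (hxs : ¬2 ^ n * |e x| ≤ g x)
    rw [hsmul, Pi.smul_apply, smul_eq_mul, one_div_pow, one_div_mul_eq_div,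
      div_le_iff₀' (by positivity)] at hgx
    rw [not_le, abs_of_pos hex] at hxs
    calc u n x ≤ 2 ^ n * (2 ^ n * e x) := by grw [hgx, hxs]
      _ = 4 ^ n * e x := by rw [← mul_assoc, ← mul_pow]; norm_num

theorem almostDominated_of_isCompact_closure_image {W K : Lp ℝ 1 μ →L[ℝ] Lp ℝ 1 μ}
    (hP : Monotone (W + K)) {γ : ℝ} (hW : ‖W‖ < γ)
    (hK : IsCompact (closure ((fun f => toWeakSpaceCLM ℝ _ (K f)) '' Metric.closedBall 0 1)))
    {e : Lp ℝ 1 μ} (he : ∀ᵐ x ∂μ, 0 < e x) : AlmostDominated (W + K) e γ := by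
  by_contra hcon
  have hfail (n : ℕ) : ∃ f, 0 ≤ f ∧ ‖f‖ = 1 ∧ γ < ‖((W + K) f - (4 : ℝ) ^ n • e)⁺‖ := by
    by_contra! hn
    refine hcon (almostDominated_of_norm_eq_one (by positivity : (0 : ℝ) ≤ 4 ^ n)
      fun f hf hf₁ => ⟨_, posPart_nonneg _, ?_, hn f hf hf₁⟩)
    exact sub_le_iff_le_add'.1 (le_posPart _)
  choose f hf hf₁ hfγ using hfail
  have hPf (n : ℕ) : 0 ≤ (W + K) (f n) := map_zero (W + K) ▸ hP (hf n)
  have he₀ : 0 ≤ e := (Lp.coeFn_nonneg e).1 (he.mono fun _ hx => hx.le)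
  obtain ⟨s, hanti, hs, hinter, hle⟩ := exists_antitone_forall_notMem_le
    (Lp.stronglyMeasurable e).measurable he hPf fun n => (W + K).unit_le_opNorm _ (hf₁ n).le
  obtain ⟨m, n, hmn, hlt⟩ := exists_setIntegral_lt_of_isCompact_weakSpace hK hs hanti hinter
    (fun n => subset_closure ⟨f n, by simp [hf₁], rfl⟩) (sub_pos.2 hW)
  refine (hfγ n).not_ge ?_
  calc ‖((W + K) (f n) - (4 : ℝ) ^ n • e)⁺‖ ≤ ∫ x in s n, (W + K) (f n) x ∂μ := by
        refine norm_posPart_sub_le_setIntegral (hPf n) (smul_nonneg (by positivity) he₀) (hs n) ?_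
        filter_upwards [hle n, Lp.coeFn_smul ((4 : ℝ) ^ n) e] with x hx hsmul
        rwa [hsmul]
    _ ≤ ∫ x in s m, (W + K) (f n) x ∂μ :=
      setIntegral_mono_set (L1.integrable_coeFn _).integrableOn
        (ae_restrict_of_ae ((Lp.coeFn_nonneg _).2 (hPf n))) (hanti hmn).eventuallyLE
    _ = ∫ x in s m, W (f n) x ∂μ + ∫ x in s m, K (f n) x ∂μ := by
      simp only [← setIntegralCLM_apply, _root_.add_apply, map_add]
    _ ≤ ‖W‖ + (γ - ‖W‖) := by
      gcongr
      exact (le_abs_self _).trans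
        ((abs_setIntegral_le_norm _ _).trans (W.unit_le_opNorm _ (hf₁ n).le))
    _ = γ := by ring

end WeakCompactness

section Transport

section NormedLattice

variable {E F : Type*} [NormedAddCommGroup E] [NormedSpace ℝ E] [Lattice E]
  [IsOrderedAddMonoid E] [NormedAddCommGroup F] [NormedSpace ℝ F] [Lattice F]
  [IsOrderedAddMonoid F]

lemma monotone_conjContinuousAlgEquiv {P : E →L[ℝ] E} (hP : Monotone P) {J : E ≃L[ℝ] F}
    (hJ : ∀ f, 0 ≤ J f ↔ 0 ≤ f) : Monotone (J.conjContinuousAlgEquiv P) := by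
  have hJle (f g : E) : J f ≤ J g ↔ f ≤ g := by
    rw [← sub_nonneg, ← map_sub, hJ, sub_nonneg]
  intro u v huv
  refine (hJle _ _).2 (hP ((hJle _ _).1 ?_))
  simpa using huv

lemma AlmostDominated.conj {P : E →L[ℝ] E} {e : E} {γ : ℝ} (h : AlmostDominated P e γ)
    {J : E ≃ₗᵢ[ℝ] F} (hJ : ∀ f, 0 ≤ J f ↔ 0 ≤ f) :
    AlmostDominated (J.toContinuousLinearEquiv.conjContinuousAlgEquiv P) (J e) γ := by
  obtain ⟨M, hM, h⟩ := h
  refine ⟨M, hM, fun u hu => ?_⟩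
  obtain ⟨r, hr, hle, hrγ⟩ := h (J.symm u) ((hJ _).1 (by simpa using hu))
  rw [J.symm.norm_map] at hle hrγ
  refine ⟨J r, (hJ r).2 hr, ?_, (J.norm_map r).trans_le hrγ⟩
  rw [← sub_nonneg, ← hJ] at hle
  simpa [sub_nonneg] using hle

end NormedLattice

variable {α : Type*} [MeasurableSpace α] {μ : Measure α}

/-- The finite measure is `ν = e μ`. -/
lemma exists_finite_linearIsometryEquiv_ae_eq_mul {e : Lp ℝ 1 μ} (he : ∀ᵐ x ∂μ, 0 < e x) :
    ∃ ν : Measure α, IsFiniteMeasure ν ∧ μ ≪ ν ∧ ν ≪ μ ∧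
      ∃ J : Lp ℝ 1 ν ≃ₗᵢ[ℝ] Lp ℝ 1 μ, ∀ u, J u =ᵐ[μ] fun x => e x * u x := by
  set w : α → NNReal := fun x => (e x).toNNReal
  have hw : Measurable w := (Lp.stronglyMeasurable e).measurable.real_toNNReal
  have hwe : ∀ᵐ x ∂μ, (w x : ℝ) = e x := he.mono fun x hx => Real.coe_toNNReal _ hx.le
  have hfinite : IsFiniteMeasure (μ.withDensity fun x => w x) :=
    isFiniteMeasure_withDensity_ofReal (L1.integrable_coeFn e).2
  have hsurj : Function.Surjective (withDensitySMulLI (E := ℝ) μ hw) := by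
    intro f
    have hint : Integrable (fun x => w x • ((w x : ℝ)⁻¹ * f x)) μ := by
      refine (L1.integrable_coeFn f).congr ?_
      filter_upwards [he, hwe] with x hx hwx
      rw [NNReal.smul_def, hwx, smul_eq_mul, mul_inv_cancel_left₀ hx.ne']
    have hint' : Integrable (fun x => (w x : ℝ)⁻¹ * f x) (μ.withDensity fun x => w x) :=
      (integrable_withDensity_iff_integrable_smul hw).2 hint
    refine ⟨hint'.toL1, Lp.ext ?_⟩
    rw [withDensitySMulLI_apply]
    filter_upwards [(memL1_smul_of_L1_withDensity hw hint'.toL1).coeFn_toLp,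
      (ae_withDensity_iff hw.coe_nnreal_ennreal).1 hint'.coeFn_toL1, he, hwe]
      with x hx hx' hex hwx
    have hwx₀ : (w x : ℝ) ≠ 0 := hwx ▸ hex.ne'
    rw [hx, hx' (by simpa using hwx₀), NNReal.smul_def, smul_eq_mul, mul_inv_cancel_left₀ hwx₀]
  refine ⟨_, hfinite, withDensity_absolutelyContinuous' hw.coe_nnreal_ennreal.aemeasurable ?_,
    withDensity_absolutelyContinuous _ _, .ofSurjective (withDensitySMulLI μ hw) hsurj,
    fun u => ?_⟩
  · filter_upwards [he] with x hx
    simpa [w] using hx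
  · rw [LinearIsometryEquiv.coe_ofSurjective, withDensitySMulLI_apply]
    filter_upwards [(memL1_smul_of_L1_withDensity hw u).coeFn_toLp, hwe] with x hx hwx
    rw [hx, NNReal.smul_def, hwx, smul_eq_mul]

lemma nonneg_iff_nonneg_of_ae_eq_mul {ν : Measure α} (hμν : μ ≪ ν) (hνμ : ν ≪ μ)
    {e f : Lp ℝ 1 μ} {u : Lp ℝ 1 ν} (he : ∀ᵐ x ∂μ, 0 < e x) (hf : f =ᵐ[μ] fun x => e x * u x) :
    0 ≤ f ↔ 0 ≤ u := by
  have hsign : ∀ᵐ x ∂μ, 0 ≤ f x ↔ 0 ≤ u x := by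
    filter_upwards [hf, he] with x hx hex
    rw [hx, mul_nonneg_iff_of_pos_left hex]
  rw [← Lp.coeFn_nonneg, ← Lp.coeFn_nonneg]
  constructor <;> intro h
  · refine hνμ ?_
    filter_upwards [hsign, h] with x hx using hx.1
  · filter_upwards [hsign, hμν h] with x hx using hx.2

lemma eq_of_ae_eq_mul_const_one {ν : Measure α} [IsFiniteMeasure ν] (hμν : μ ≪ ν)
    {e f : Lp ℝ 1 μ} (hf : f =ᵐ[μ] fun x => e x * Lp.const 1 ν (1 : ℝ) x) : f = e := by
  refine Lp.ext ?_
  filter_upwards [hf, hμν (Lp.coeFn_const 1 ν (1 : ℝ))] with x hx hx₁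
  rw [hx, hx₁, Function.const_apply, mul_one]

theorem AlmostDominated.exists_pow_norm_le_half {P : Lp ℝ 1 μ →L[ℝ] Lp ℝ 1 μ} {e : Lp ℝ 1 μ}
    {γ : ℝ} (hdom : AlmostDominated P e γ) (he : ∀ᵐ x ∂μ, 0 < e x) (hP : Monotone P)
    (hPe : P e = e) (hP₀ : ∀ f, 0 ≤ f → f ≠ 0 → ∀ᵐ x ∂μ, 0 < P f x) (hγ₀ : 0 ≤ γ) (hγ : γ < 1)
    {Φ : Lp ℝ 1 μ →L[ℝ] ℝ} (hΦ : StrictlyPositive Φ) (hΦP : ∀ f, Φ (P f) = Φ f) :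
    ∃ n, ∀ g, Φ g = 0 → ‖(P ^ n) g‖ ≤ 1 / 2 * ‖g‖ := by
  obtain ⟨ν, hν, hμν, hνμ, J, hJ⟩ := exists_finite_linearIsometryEquiv_ae_eq_mul he
  have hJ₁ : J (Lp.const 1 ν 1) = e := eq_of_ae_eq_mul_const_one hμν (hJ _)
  have hJpos (u : Lp ℝ 1 ν) : 0 ≤ J u ↔ 0 ≤ u :=
    nonneg_iff_nonneg_of_ae_eq_mul hμν hνμ he (hJ u)
  have hJsymm (f : Lp ℝ 1 μ) : 0 ≤ J.symm f ↔ 0 ≤ f := by rw [← hJpos, J.apply_symm_apply]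
  set Q := J.symm.toContinuousLinearEquiv.conjContinuousAlgEquiv P with hQ
  have hQapply (u : Lp ℝ 1 ν) : J (Q u) = P (J u) := J.apply_symm_apply _
  have hQ₀ (u : Lp ℝ 1 ν) (hu : 0 ≤ u) (hu₀ : u ≠ 0) : ∀ᵐ x ∂ν, 0 < Q u x := by
    refine hνμ ?_
    filter_upwards [hJ (Q u), he, hP₀ (J u) ((hJpos u).2 hu) (by simpa using hu₀)]
      with x hx hex hPx
    rw [← hQapply, hx] at hPx
    exact (mul_pos_iff_of_pos_left hex).1 hPx
  have hdomQ : AlmostDominated Q (Lp.const 1 ν 1) γ := by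
    have hconj := hdom.conj hJsymm
    rwa [← hJ₁, J.symm_apply_apply] at hconj
  have hQ₁ : Q (Lp.const 1 ν 1) = Lp.const 1 ν 1 := J.injective (by rw [hQapply, hJ₁, hPe])
  have hΦJ : StrictlyPositive (Φ.comp J.toContinuousLinearEquiv.toContinuousLinearMap) :=
    fun u hu hu₀ => hΦ ((hJpos u).2 hu) (by simpa using hu₀)
  obtain ⟨n, hn⟩ := hdomQ.exists_pow_norm_le_half_of_const_one
    (monotone_conjContinuousAlgEquiv hP hJsymm) hQ₁ hQ₀ hγ₀ hγ hΦJ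
    fun u => by simpa [hQapply] using hΦP (J u)
  refine ⟨n, fun g hg => ?_⟩
  simpa [hQ, ← map_pow] using hn (J.symm g) (by simpa using hg)

end Transport

section Eigentriplet

section NormedLattice

variable {E : Type*} [NormedAddCommGroup E] [NormedSpace ℝ E] [Lattice E]

lemma AlmostDominated.smul [IsOrderedModule ℝ E] {P : E →L[ℝ] E} {e : E} {γ c : ℝ}
    (h : AlmostDominated P e γ) (hc : 0 ≤ c) : AlmostDominated (c • P) e (c * γ) := by
  obtain ⟨M, hM, h⟩ := h
  refine ⟨c * M, mul_nonneg hc hM, fun f hf => ?_⟩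
  obtain ⟨r, hr, hle, hrγ⟩ := h f hf
  refine ⟨c • r, smul_nonneg hc hr, ?_, ?_⟩
  · calc (c • P) f = c • P f := rfl
      _ ≤ c • ((M * ‖f‖) • e + r) := smul_le_smul_of_nonneg_left hle hc
      _ = (c * M * ‖f‖) • e + c • r := by rw [smul_add, smul_smul, mul_assoc]
  · rw [norm_smul, Real.norm_of_nonneg hc, mul_assoc]
    gcongr

lemma StrictlyPositive.le_eigenvalue [IsOrderedAddMonoid E] {Φ : E →L[ℝ] ℝ}
    (hΦ : StrictlyPositive Φ) {S : E →L[ℝ] E} {κ Λ : ℝ} (hΦS : ∀ f, Φ (S f) = Λ * Φ f) {g : E}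
    (hg : 0 ≤ g) (hg₀ : g ≠ 0) (hκ : κ • g ≤ S g) : κ ≤ Λ := by
  have h := hΦ.monotone hκ
  rw [map_smul, hΦS, smul_eq_mul] at h
  exact le_of_mul_le_mul_right h (hΦ hg hg₀)

end NormedLattice

variable {α : Type*} [MeasurableSpace α] {μ : Measure α}

lemma ae_pos_smul_iff {c : ℝ} (hc : 0 < c) (f : Lp ℝ 1 μ) :
    (∀ᵐ x ∂μ, 0 < (c • f) x) ↔ ∀ᵐ x ∂μ, 0 < f x := by
  refine eventually_congr ?_
  filter_upwards [Lp.coeFn_smul c f] with x hx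
  rw [hx, Pi.smul_apply, smul_eq_mul, mul_pos_iff_of_pos_left hc]

lemma linftyPairing_pos {φ : Lp ℝ ∞ μ} (hφ : 0 ≤ φ) (hφ₀ : φ ≠ 0) {f : Lp ℝ 1 μ}
    (hf : ∀ᵐ x ∂μ, 0 < f x) : 0 < linftyPairing φ f := by
  rw [linftyPairing_apply]
  have hnonneg : 0 ≤ᵐ[μ] fun x => φ x * f x := by
    filter_upwards [hf, (Lp.coeFn_nonneg φ).2 hφ] with x hfx hφx using mul_nonneg hφx hfx.le
  refine (integral_nonneg_of_ae hnonneg).lt_of_ne' fun hzero => hφ₀ ?_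
  rw [Lp.eq_zero_iff_ae_eq_zero]
  have hzero_ae :=
    (integral_eq_zero_iff_of_nonneg_ae hnonneg (integrable_linfty_mul_L1 φ f)).1 hzero
  filter_upwards [hzero_ae, hf] with x hx hfx
  exact (mul_eq_zero.1 hx).resolve_right hfx.ne'

lemma linftyPairing_strictlyPositive_of_eigen {B : Lp ℝ 1 μ →L[ℝ] Lp ℝ 1 μ}
    (hB : ∀ f, 0 ≤ f → f ≠ 0 → ∀ᵐ x ∂μ, 0 < B f x) {φ : Lp ℝ ∞ μ} (hφ : 0 ≤ φ) {c : ℝ}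
    (hφB : ∀ f, linftyPairing φ (B f) = c * linftyPairing φ f) {f₀ : Lp ℝ 1 μ} (hf₀ : 0 ≤ f₀)
    (hφf₀ : linftyPairing φ f₀ = 1) : 0 < c ∧ StrictlyPositive (linftyPairing φ) := by
  have hφ₀ : φ ≠ 0 := by
    rintro rfl
    simp [linftyPairing] at hφf₀
  have hf₀ne : f₀ ≠ 0 := by
    rintro rfl
    simp at hφf₀
  have hpos (f : Lp ℝ 1 μ) (hf : 0 ≤ f) (hfne : f ≠ 0) : 0 < c * linftyPairing φ f :=
    (linftyPairing_pos hφ hφ₀ (hB f hf hfne)).trans_eq (hφB f)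
  have hc : 0 < c := by simpa [hφf₀] using hpos f₀ hf₀ hf₀ne
  exact ⟨hc, fun f hf hfne => (mul_pos_iff_of_pos_left hc).1 (hpos f hf hfne)⟩

lemma le_eigenvalue_of_linftyPairing_le {ψ : Lp ℝ ∞ μ} (hψ : 0 ≤ ψ) (hψ₀ : ψ ≠ 0)
    {f g : Lp ℝ 1 μ} (hf : ∀ᵐ x ∂μ, 0 < f x) {κ Λ : ℝ} (hg : g = Λ • f)
    (hκ : κ * linftyPairing ψ f ≤ linftyPairing ψ g) : κ ≤ Λ := by
  rw [hg, map_smul, smul_eq_mul] at hκ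
  exact le_of_mul_le_mul_right hκ (linftyPairing_pos hψ hψ₀ hf)

lemma almostDominated_inv_smul_of_isCompact_closure_image {B W K : Lp ℝ 1 μ →L[ℝ] Lp ℝ 1 μ}
    (hB : B = W + K) (hBmono : Monotone B)
    (hK : IsCompact (closure ((fun f => toWeakSpaceCLM ℝ _ (K f)) '' Metric.closedBall 0 1)))
    {e : Lp ℝ 1 μ} (he : ∀ᵐ x ∂μ, 0 < e x) {c : ℝ} (hW : ‖W‖ < c) :
    ∃ γ, 0 ≤ γ ∧ γ < 1 ∧ AlmostDominated (c⁻¹ • B) e γ := by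
  subst hB
  have hc : 0 < c := (norm_nonneg W).trans_lt hW
  obtain ⟨γ, hWγ, hγc⟩ := exists_between hW
  have hγ : 0 ≤ γ := (norm_nonneg W).trans hWγ.le
  refine ⟨c⁻¹ * γ, by positivity, (inv_mul_lt_one₀ hc).2 hγc, ?_⟩
  exact (almostDominated_of_isCompact_closure_image hBmono hWγ hK he).smul (by positivity)

theorem AlmostDominated.exists_exponential_convergence {T : Lp ℝ 1 μ →L[ℝ] Lp ℝ 1 μ} {k : ℕ}
    {e : Lp ℝ 1 μ} {γ : ℝ} (hdom : AlmostDominated (T ^ k) e γ) (hγ₀ : 0 ≤ γ) (hγ : γ < 1)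
    (he : ∀ᵐ x ∂μ, 0 < e x) (hT : Monotone T) (hTe : T e = e)
    (hTk : ∀ f, 0 ≤ f → f ≠ 0 → ∀ᵐ x ∂μ, 0 < (T ^ k) f x) {Φ : Lp ℝ 1 μ →L[ℝ] ℝ}
    (hΦ : StrictlyPositive Φ) (hΦT : ∀ f, Φ (T f) = Φ f) (hΦe : Φ e = 1) :
    ∃ ζ : ℝ, 0 < ζ ∧ ζ < 1 ∧ ∃ C : ℝ, 1 ≤ C ∧
      ∀ n f, ‖(T ^ n) f - Φ f • e‖ ≤ C * ζ ^ n * ‖f - Φ f • e‖ := by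
  obtain ⟨m, hm⟩ := hdom.exists_pow_norm_le_half he (monotone_pow hT k)
    (pow_apply_eq_self hTe k) hTk hγ₀ hγ hΦ (apply_pow_apply_of_apply_apply hΦT k)
  obtain ⟨ζ, hζ₀, hζ₁, C, hC, hgeom⟩ := exists_geometric_bound one_half_lt_one (k * m) ‖T‖
  refine ⟨ζ, hζ₀, hζ₁, C, hC, fun n f => ?_⟩
  set g := f - Φ f • e with hg
  have hTg : (T ^ n) g = (T ^ n) f - Φ f • e := by
    rw [hg, map_sub, map_smul, pow_apply_eq_self hTe]
  have hΦg : Φ g = 0 := by rw [hg, map_sub, map_smul, hΦe, smul_eq_mul, mul_one, sub_self]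
  rw [← hTg]
  refine hgeom (fun n => ‖(T ^ n) g‖) (fun n => norm_nonneg _) (fun n => ?_) (fun n => ?_) n
  · rw [pow_succ']
    exact T.le_opNorm _
  · rw [add_comm, pow_add, pow_mul]
    exact hm _ ((apply_pow_apply_of_apply_apply hΦT n g).trans hΦg)

lemma AlmostDominated.exists_exponential_convergence_of_eigen {S : Lp ℝ 1 μ →L[ℝ] Lp ℝ 1 μ}
    {k : ℕ} {e : Lp ℝ 1 μ} {γ Λ : ℝ} (hdom : AlmostDominated ((Λ ^ k)⁻¹ • S ^ k) e γ)
    (hγ₀ : 0 ≤ γ) (hγ : γ < 1) (he : ∀ᵐ x ∂μ, 0 < e x) (hS : Monotone S) (hΛ : 0 < Λ)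
    (hSe : S e = Λ • e) (hSk : ∀ f, 0 ≤ f → f ≠ 0 → ∀ᵐ x ∂μ, 0 < (S ^ k) f x)
    {Φ : Lp ℝ 1 μ →L[ℝ] ℝ} (hΦ : StrictlyPositive Φ) (hΦS : ∀ f, Φ (S f) = Λ * Φ f)
    (hΦe : Φ e = 1) :
    ∃ ζ : ℝ, 0 < ζ ∧ ζ < 1 ∧ ∃ C : ℝ, 1 ≤ C ∧
      ∀ (n : ℕ) f, ‖(Λ ^ n)⁻¹ • (S ^ n) f - Φ f • e‖ ≤ C * ζ ^ n * ‖f - Φ f • e‖ := by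
  set T := Λ⁻¹ • S with hT
  have hTpow (n : ℕ) : T ^ n = (Λ ^ n)⁻¹ • S ^ n := by rw [hT, smul_pow, inv_pow]
  have hTpow_apply (n : ℕ) (f : Lp ℝ 1 μ) : (T ^ n) f = (Λ ^ n)⁻¹ • (S ^ n) f := by
    rw [hTpow]; rfl
  have hTapply (f : Lp ℝ 1 μ) : T f = Λ⁻¹ • S f := rfl
  have hTmono : Monotone T := fun f g hfg =>
    smul_le_smul_of_nonneg_left (hS hfg) (inv_nonneg.2 hΛ.le)
  have hTe : T e = e := by rw [hTapply, hSe, inv_smul_smul₀ hΛ.ne']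
  have hTk (f : Lp ℝ 1 μ) (hf : 0 ≤ f) (hf₀ : f ≠ 0) : ∀ᵐ x ∂μ, 0 < (T ^ k) f x := by
    rw [hTpow_apply, ae_pos_smul_iff (by positivity)]
    exact hSk f hf hf₀
  have hΦT (f : Lp ℝ 1 μ) : Φ (T f) = Φ f := by
    rw [hTapply, map_smul, hΦS, smul_eq_mul, inv_mul_cancel_left₀ hΛ.ne']
  simp only [← hTpow_apply]
  rw [← hTpow] at hdom
  exact hdom.exists_exponential_convergence hγ₀ hγ he hTmono hTe hTk hΦ hΦT hΦe

theorem perron_eigentriplet_discrete_exponential_convergence_general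
    (S W K : Lp ℝ 1 μ →L[ℝ] Lp ℝ 1 μ) (hSpos : ∀ f, 0 ≤ f → 0 ≤ S f)
    (k : ℕ) (κ₀ : ℝ) (hκ₀ : 0 < κ₀)
    (h1 : (∃ g₀ : Lp ℝ 1 μ, 0 ≤ g₀ ∧ g₀ ≠ 0 ∧ κ₀ • g₀ ≤ S g₀) ∨
      (∃ ψ₀ : Lp ℝ ⊤ μ, 0 ≤ ψ₀ ∧ ψ₀ ≠ 0 ∧ ∀ f : Lp ℝ 1 μ,
        0 ≤ f → κ₀ * ∫ x, ψ₀ x * f x ∂μ ≤ ∫ x, ψ₀ x * (S f) x ∂μ))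
    (h2 : S ^ k = W + K) (hWnorm : ‖W‖ < κ₀ ^ k)
    (hKweak : IsCompact (closure
      ((fun f => toWeakSpaceCLM ℝ _ (K f)) '' Metric.closedBall 0 1)))
    (h3 : ∀ f : Lp ℝ 1 μ, 0 ≤ f → f ≠ 0 → ∀ᵐ x ∂μ, 0 < ((S ^ k) f) x)
    (Λ₀ : ℝ) (f₀ : Lp ℝ 1 μ) (φ₀ : Lp ℝ ⊤ μ) (hf₀pos : 0 ≤ f₀) (hφ₀pos : 0 ≤ φ₀)
    (hf₀ : S f₀ = Λ₀ • f₀)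
    (hφ₀ : ∀ f : Lp ℝ 1 μ, ∫ x, φ₀ x * (S f) x ∂μ = Λ₀ * ∫ x, φ₀ x * f x ∂μ)
    (hpair : (∫ x, φ₀ x * f₀ x ∂μ) = 1) :
    ∃ ζ : ℝ, 0 < ζ ∧ ζ < 1 ∧ ∃ C : ℝ, 1 ≤ C ∧ ∀ (n : ℕ) (f : Lp ℝ 1 μ),
      ‖(Λ₀ ^ n)⁻¹ • ((S ^ n) f) - (∫ x, φ₀ x * f x ∂μ) • f₀‖ ≤
        C * ζ ^ n * ‖f - (∫ x, φ₀ x * f x ∂μ) • f₀‖ := by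
  simp only [← linftyPairing_apply] at h1 hφ₀ hpair ⊢
  have hS : Monotone S := (monotone_iff_map_nonneg S).2 hSpos
  obtain ⟨hΛk, hΦ⟩ := linftyPairing_strictlyPositive_of_eigen h3 hφ₀pos
    (apply_pow_apply_of_apply_apply_eq_mul hφ₀ k) hf₀pos hpair
  have hf₀ne : f₀ ≠ 0 := fun h => by simp [h] at hpair
  have hf₀ae : ∀ᵐ x ∂μ, 0 < f₀ x := by
    simpa only [pow_apply_eq_pow_smul hf₀, ae_pos_smul_iff hΛk] using h3 f₀ hf₀pos hf₀ne
  have hκΛ : κ₀ ≤ Λ₀ := by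
    obtain ⟨g, hg, hg₀, hSg⟩ | ⟨ψ, hψ, hψ₀, hSψ⟩ := h1
    · exact hΦ.le_eigenvalue hφ₀ hg hg₀ hSg
    · exact le_eigenvalue_of_linftyPairing_le hψ hψ₀ hf₀ae hf₀ (hSψ f₀ hf₀pos)
  have hΛ : 0 < Λ₀ := hκ₀.trans_le hκΛ
  obtain ⟨γ, hγ₀, hγ, hdom⟩ := almostDominated_inv_smul_of_isCompact_closure_image h2
    (monotone_pow hS k) hKweak hf₀ae (hWnorm.trans_le (pow_le_pow_left₀ hκ₀.le hκΛ k))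
  exact hdom.exists_exponential_convergence_of_eigen hγ₀ hγ hf₀ae hS hΛ hf₀ h3 hΦ hφ₀ hpair

end Eigentriplet

/-- **Corollary 2.5 (contraction part).** Under the hypotheses of the Perron eigentriplet
corollary, with `(Λ₀, f₀, φ₀)` the triplet satisfying `S f₀ = Λ₀ f₀`, `S* φ₀ = Λ₀ φ₀`,
`‖φ₀‖_∞ = ⟨φ₀, f₀⟩ = 1`, there exist `ζ ∈ (0,1)` and `C ≥ 1` such that for every `n` and
every `f ∈ L¹(ℝ^d)`, `‖Λ₀⁻ⁿ Sⁿ f − ⟨φ₀, f⟩ f₀‖ ≤ C ζⁿ ‖f − ⟨φ₀, f⟩ f₀‖`. -/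
theorem perron_eigentriplet_discrete_exponential_convergence
    {d : ℕ}
    (S W K : Lp ℝ 1 (volume : Measure (EuclideanSpace ℝ (Fin d))) →L[ℝ]
      Lp ℝ 1 (volume : Measure (EuclideanSpace ℝ (Fin d))))
    (hSpos : ∀ f : Lp ℝ 1 (volume : Measure (EuclideanSpace ℝ (Fin d))), 0 ≤ f → 0 ≤ S f)
    (k : ℕ) (κ₀ : ℝ) (hκ₀ : 0 < κ₀)
    (h1 : (∃ g₀ : Lp ℝ 1 (volume : Measure (EuclideanSpace ℝ (Fin d))),
        0 ≤ g₀ ∧ g₀ ≠ 0 ∧ κ₀ • g₀ ≤ S g₀) ∨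
      (∃ ψ₀ : Lp ℝ ⊤ (volume : Measure (EuclideanSpace ℝ (Fin d))),
        0 ≤ ψ₀ ∧ ψ₀ ≠ 0 ∧ ∀ f : Lp ℝ 1 (volume : Measure (EuclideanSpace ℝ (Fin d))),
          0 ≤ f → κ₀ * ∫ x, ψ₀ x * f x ≤ ∫ x, ψ₀ x * (S f) x))
    (h2 : S ^ k = W + K)
    (hWnorm : ‖W‖ < κ₀ ^ k)
    (hKweak : IsCompact (closure
      ((fun f => toWeakSpaceCLM ℝ _ (K f)) '' Metric.closedBall 0 1)))
    (h3 : ∀ f : Lp ℝ 1 (volume : Measure (EuclideanSpace ℝ (Fin d))),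
      0 ≤ f → f ≠ 0 → ∀ᵐ x, 0 < ((S ^ k) f) x)
    (Λ₀ : ℝ) (f₀ : Lp ℝ 1 (volume : Measure (EuclideanSpace ℝ (Fin d))))
    (φ₀ : Lp ℝ ⊤ (volume : Measure (EuclideanSpace ℝ (Fin d))))
    (hf₀pos : 0 ≤ f₀) (hφ₀pos : 0 ≤ φ₀)
    (hf₀ : S f₀ = Λ₀ • f₀)
    (hφ₀ : ∀ f : Lp ℝ 1 (volume : Measure (EuclideanSpace ℝ (Fin d))),
      ∫ x, φ₀ x * (S f) x = Λ₀ * ∫ x, φ₀ x * f x)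
    (hφ₀norm : ‖φ₀‖ = 1) (hpair : (∫ x, φ₀ x * f₀ x) = 1) :
    ∃ ζ : ℝ, 0 < ζ ∧ ζ < 1 ∧ ∃ C : ℝ, 1 ≤ C ∧
      ∀ (n : ℕ) (f : Lp ℝ 1 (volume : Measure (EuclideanSpace ℝ (Fin d)))),
        ‖(Λ₀ ^ n)⁻¹ • ((S ^ n) f) - (∫ x, φ₀ x * f x) • f₀‖ ≤
          C * ζ ^ n * ‖f - (∫ x, φ₀ x * f x) • f₀‖ :=
  perron_eigentriplet_discrete_exponential_convergence_general S W K hSpos k κ₀ hκ₀ h1 h2 hWnorm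
    hKweak h3 Λ₀ f₀ φ₀ hf₀pos hφ₀pos hf₀ hφ₀ hpair
end

section
/- Let v : ℝ × ℝ^d → ℝ^d be continuous, with v(t, ·) continuously differentiable for each t and with |div_x v(t, x)| ≤ D for all (t, x), and let X_{·,·} be a global flow of v such that each map x ↦ X_{t,s}(x) is a C¹-diffeomorphism of ℝ^d with inverse X_{s,t}. Then for all s, t ∈ ℝ and every Lebesgue measurable set E ⊆ ℝ^d, e^{−|t−s| D} λ(E) ≤ λ(X_{s,t}(E)) ≤ e^{|t−s| D} λ(E), where λ denotes Lebesgue measure on ℝ^d. -/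
open MeasureTheory
open Set Metric Filter Topology Function

/-!
The vector field is only continuous in time and its spatial derivative need not be jointly
continuous, so the classical equation for the Jacobian determinant of the flow is not available.
Instead, fix a test function `φ ≥ 0` and a time `t`, and let the *initial* time `a` vary in
`G a = ∫ φ (X_{t,a} x) dx`. By the cocycle identity, near `a = s` this is `∫ ψ (X_{s,a} x) dx` with
`ψ = φ ∘ X_{t,s}`, and `X_{s,a} x = x + (s - a) v(s, x) + o(a - s)` needs only continuity of `v`.
Integrating by parts, `G' s = -∫ Dψ(x) v(s, x) dx = ∫ ψ div v(s, ·) dx`, so `|G'| ≤ D G`. Grönwall's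
inequality compares `G s` with `G t = ∫ φ`, hence the push-forward of the measure under `X_{t,s}`
with the measure itself. The lower bound is the upper bound for the inverse map.
-/

section RealCurves

variable {F : Type*} [NormedAddCommGroup F] [NormedSpace ℝ F]

lemma norm_le_exp_mul_norm_of_norm_deriv_le {f f' : ℝ → F} {K : ℝ}
    (hf : ∀ t, HasDerivAt f (f' t) t) (hf' : ∀ t, ‖f' t‖ ≤ K * ‖f t‖) (s t : ℝ) :
    ‖f t‖ ≤ Real.exp (|t - s| * K) * ‖f s‖ := by
  have hline (τ : ℝ) : HasDerivAt (f ∘ AffineMap.lineMap s t)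
      ((t - s) • f' (AffineMap.lineMap s t τ)) τ :=
    (hf _).scomp τ AffineMap.hasDerivAt_lineMap
  have hbound := norm_le_gronwallBound_of_norm_deriv_right_le (a := 0) (b := 1) (ε := 0)
    (K := |t - s| * K) (fun τ _ ↦ (hline τ).continuousAt.continuousWithinAt)
    (fun τ _ ↦ (hline τ).hasDerivWithinAt) le_rfl
    (fun τ _ ↦ by
      rw [norm_smul, Real.norm_eq_abs, add_zero, mul_assoc]
      exact mul_le_mul_of_nonneg_left (hf' _) (abs_nonneg _))
    1 (right_mem_Icc.2 zero_le_one)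
  simpa [gronwallBound_ε0, mul_comm] using hbound

-- The speed bound is only available inside the ball, which the curve has no time to leave.
lemma norm_sub_le_of_norm_deriv_lt_on_closedBall {f f' : ℝ → F} {a b M r : ℝ} (hM : 0 ≤ M)
    (hf : ∀ t ∈ uIcc a b, HasDerivAt f (f' t) t)
    (hf' : ∀ t ∈ uIcc a b, f t ∈ closedBall (f a) r → ‖f' t‖ < M) (hr : M * |b - a| ≤ r) :
    ‖f b - f a‖ ≤ M * |b - a| := by
  rcases eq_or_ne a b with rfl | hab
  · simp
  have hpos : 0 < |b - a| := abs_pos.2 (sub_ne_zero.2 hab.symm)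
  have hmem {τ : ℝ} (hτ : τ ∈ Icc (0 : ℝ) 1) : AffineMap.lineMap a b τ ∈ uIcc a b := by
    rw [← segment_eq_uIcc, segment_eq_image_lineMap]
    exact mem_image_of_mem _ hτ
  have hline {τ : ℝ} (hτ : τ ∈ Icc (0 : ℝ) 1) :
      HasDerivAt (fun τ ↦ f (AffineMap.lineMap a b τ) - f a)
        ((b - a) • f' (AffineMap.lineMap a b τ)) τ :=
    ((hf _ (hmem hτ)).scomp τ AffineMap.hasDerivAt_lineMap).sub_const _
  have hbound := image_norm_le_of_norm_deriv_right_lt_deriv_boundary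
    (B := fun τ ↦ M * |b - a| * τ) (B' := fun _ ↦ M * |b - a|)
    (fun τ hτ ↦ (hline hτ).continuousAt.continuousWithinAt)
    (fun τ hτ ↦ (hline (Ico_subset_Icc_self hτ)).hasDerivWithinAt) (by simp)
    (fun τ ↦ by simpa using (hasDerivAt_id τ).const_mul (M * |b - a|))
    (fun τ hτ heq ↦ by
      have hball : f (AffineMap.lineMap a b τ) ∈ closedBall (f a) r := by
        rw [mem_closedBall_iff_norm, heq]
        exact (mul_le_of_le_one_right (by positivity) hτ.2.le).trans hr
      rw [norm_smul, Real.norm_eq_abs, mul_comm M]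
      exact mul_lt_mul_of_pos_left (hf' _ (hmem (Ico_subset_Icc_self hτ)) hball) hpos)
    (right_mem_Icc.2 zero_le_one)
  simpa using hbound

end RealCurves

section ParametricIntegral

theorem hasDerivAt_integral_of_dominated_loc_of_norm_sub_le {α 𝕜 F : Type*} [MeasurableSpace α]
    {μ : Measure α} [RCLike 𝕜] [NormedAddCommGroup F] [NormedSpace ℝ F] [NormedSpace 𝕜 F]
    {f : 𝕜 → α → F} {f' : α → F} {bound : α → ℝ} {t₀ : 𝕜} {s : Set 𝕜} (hs : s ∈ 𝓝 t₀)
    (hf_meas : ∀ t ∈ s, AEStronglyMeasurable (f t) μ) (hf_int : Integrable (f t₀) μ)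
    (hf'_meas : AEStronglyMeasurable f' μ)
    (h_lip : ∀ᵐ x ∂μ, ∀ t ∈ s, ‖f t x - f t₀ x‖ ≤ bound x * ‖t - t₀‖)
    (bound_integrable : Integrable bound μ) (h_diff : ∀ᵐ x ∂μ, HasDerivAt (f · x) (f' x) t₀) :
    HasDerivAt (fun t ↦ ∫ x, f t x ∂μ) (∫ x, f' x ∂μ) t₀ := by
  let L : F →L[𝕜] 𝕜 →L[𝕜] F := ContinuousLinearMap.smulRightL 𝕜 𝕜 F 1
  obtain ⟨hL_int, hderiv⟩ := hasFDerivAt_integral_of_dominated_loc_of_lip' hs hf_meas hf_int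
    (L.continuous.comp_aestronglyMeasurable hf'_meas) h_lip bound_integrable
    (h_diff.mono fun _ hx ↦ hx.hasFDerivAt)
  have hderiv_one := hderiv.hasDerivAt
  rw [ContinuousLinearMap.integral_apply hL_int] at hderiv_one
  simpa [L] using hderiv_one

end ParametricIntegral

section Comparison

variable {E : Type*} [NormedAddCommGroup E] [NormedSpace ℝ E] [FiniteDimensional ℝ E]

lemma exists_contDiff_eq_one_on_isCompact {K U : Set E} (hK : IsCompact K) (hU : IsOpen U)
    (hKU : K ⊆ U) (n : ℕ∞) :
    ∃ φ : E → ℝ, ContDiff ℝ n φ ∧ HasCompactSupport φ ∧ (∀ x, φ x ∈ Icc 0 1) ∧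
      EqOn φ 1 K ∧ EqOn φ 0 Uᶜ := by
  have : ProperSpace E := FiniteDimensional.proper_real E
  obtain ⟨L, hL, hKL, hLU⟩ := exists_compact_between hK hU hKU
  obtain ⟨φ, hφK, hφL, hφ⟩ := exists_contMDiffMap_one_nhds_of_subset_interior (n := n)
    (modelWithCornersSelf ℝ E) hK.isClosed hKL
  exact ⟨φ, φ.contMDiff.contDiff, .intro hL hφL, hφ, hφK.self_of_nhdsSet,
    fun x hx ↦ hφL x fun hxL ↦ hx (hLU hxL)⟩

variable [MeasurableSpace E] [BorelSpace E]

lemma measure_le_measure_of_integral_contDiff_le {μ ν : Measure E} [IsFiniteMeasureOnCompacts μ]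
    [IsFiniteMeasureOnCompacts ν] {n : ℕ∞}
    (h : ∀ φ : E → ℝ, ContDiff ℝ n φ → HasCompactSupport φ → 0 ≤ φ →
      ∫ x, φ x ∂μ ≤ ∫ x, φ x ∂ν)
    {K U : Set E} (hK : IsCompact K) (hU : IsOpen U) (hKU : K ⊆ U) : μ K ≤ ν U := by
  obtain ⟨φ, hφ, hφc, hφ01, hφK, hφU⟩ := exists_contDiff_eq_one_on_isCompact hK hU hKU n
  have hφ0 : 0 ≤ φ := fun x ↦ (hφ01 x).1
  have hint (ρ : Measure E) [IsFiniteMeasureOnCompacts ρ] : Integrable φ ρ :=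
    hφ.continuous.integrable_of_hasCompactSupport hφc
  calc μ K = ∫⁻ x, K.indicator 1 x ∂μ := (lintegral_indicator_one hK.measurableSet).symm
    _ ≤ ∫⁻ x, ENNReal.ofReal (φ x) ∂μ :=
      lintegral_mono <| indicator_le fun x hx ↦ by simp [hφK hx]
    _ = ENNReal.ofReal (∫ x, φ x ∂μ) :=
      (ofReal_integral_eq_lintegral_ofReal (hint μ) (.of_forall hφ0)).symm
    _ ≤ ENNReal.ofReal (∫ x, φ x ∂ν) := ENNReal.ofReal_le_ofReal (h φ hφ hφc hφ0)
    _ = ∫⁻ x, ENNReal.ofReal (φ x) ∂ν :=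
      ofReal_integral_eq_lintegral_ofReal (hint ν) (.of_forall hφ0)
    _ ≤ ∫⁻ x, U.indicator 1 x ∂ν := lintegral_mono <|
      le_indicator (fun x _ ↦ by simpa using (hφ01 x).2) fun x hx ↦ by simp [hφU hx]
    _ = ν U := lintegral_indicator_one hU.measurableSet

theorem measure_le_of_integral_contDiff_le {μ ν : Measure E} [IsFiniteMeasureOnCompacts μ]
    [IsFiniteMeasureOnCompacts ν] {n : ℕ∞}
    (h : ∀ φ : E → ℝ, ContDiff ℝ n φ → HasCompactSupport φ → 0 ≤ φ →
      ∫ x, φ x ∂μ ≤ ∫ x, φ x ∂ν) :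
    μ ≤ ν := by
  have : ProperSpace E := FiniteDimensional.proper_real E
  refine Measure.le_iff'.2 fun A ↦ ?_
  rw [A.measure_eq_iInf_isOpen ν]
  refine le_iInf₂ fun U hAU ↦ le_iInf fun hU ↦ (measure_mono hAU).trans ?_
  rw [hU.measure_eq_iSup_isCompact μ]
  exact iSup₂_le fun K hKU ↦ iSup_le fun hK ↦
    measure_le_measure_of_integral_contDiff_le h hK hU hKU

end Comparison

section Divergence

variable {E : Type*} [NormedAddCommGroup E] [NormedSpace ℝ E]

/-- The divergence of a vector field `u` on a normed space, defined without coordinates as the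
trace of the derivative. It is `0` at points where `u` is not differentiable. -/
noncomputable def divergence (u : E → E) (x : E) : ℝ :=
  LinearMap.trace ℝ E (fderiv ℝ u x : E →ₗ[ℝ] E)

variable [FiniteDimensional ℝ E]

lemma divergence_smul {ψ : E → ℝ} {u : E → E} {x : E} (hψ : DifferentiableAt ℝ ψ x)
    (hu : DifferentiableAt ℝ u x) :
    divergence (ψ • u) x = ψ x * divergence u x + fderiv ℝ ψ x (u x) := by
  have htrace : LinearMap.trace ℝ E ((fderiv ℝ ψ x).smulRight (u x) : E →L[ℝ] E)
      = fderiv ℝ ψ x (u x) := LinearMap.trace_smulRight (fderiv ℝ ψ x : E →ₗ[ℝ] ℝ) (u x)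
  rw [divergence, fderiv_smul hψ hu, ContinuousLinearMap.toLinearMap_add, map_add, htrace,
    ContinuousLinearMap.toLinearMap_smul, map_smul, smul_eq_mul, divergence]

lemma divergence_eq_sum_fderiv_coord {ι : Type*} [Fintype ι] (b : Module.Basis ι ℝ E) {u : E → E}
    {x : E} (hu : DifferentiableAt ℝ u x) :
    divergence u x = ∑ i, fderiv ℝ (fun y ↦ b.coord i (u y)) x (b i) := by
  classical
  rw [divergence, LinearMap.trace_eq_matrix_trace ℝ b, Matrix.trace]
  refine Finset.sum_congr rfl fun i _ ↦ ?_
  have hcoord : HasFDerivAt (fun y ↦ b.coord i (u y))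
      ((b.coord i).toContinuousLinearMap ∘L fderiv ℝ u x) x :=
    (b.coord i).toContinuousLinearMap.hasFDerivAt.comp x hu.hasFDerivAt
  rw [hcoord.fderiv, Matrix.diag_apply, LinearMap.toMatrix_apply]
  rfl

lemma continuous_divergence {u : E → E} (hu : ContDiff ℝ 1 u) : Continuous (divergence u) :=
  (LinearMap.trace ℝ E ∘ₗ ContinuousLinearMap.coeLM ℝ).continuous_of_finiteDimensional.comp
    (hu.continuous_fderiv one_ne_zero)

variable [MeasurableSpace E] [BorelSpace E] {μ : Measure E} [μ.IsAddHaarMeasure]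

lemma integral_fderiv_apply_eq_zero {f : E → ℝ} (hf : ContDiff ℝ 1 f) (hfc : HasCompactSupport f)
    (y : E) : ∫ x, fderiv ℝ f x y ∂μ = 0 := by
  have hf' : Integrable (fun x ↦ fderiv ℝ f x y) μ :=
    ((hf.continuous_fderiv one_ne_zero).clm_apply
      continuous_const).integrable_of_hasCompactSupport (hfc.fderiv_apply ℝ y)
  simpa using integral_mul_fderiv_eq_neg_fderiv_mul_of_integrable (μ := μ) (f := fun _ ↦ (1 : ℝ))
    (g := f) (v := y) (by simp) (by simpa using hf')
    (by simpa using hf.continuous.integrable_of_hasCompactSupport hfc)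
    (fun _ _ ↦ differentiableAt_const _) (fun x _ ↦ hf.differentiable one_ne_zero x)

theorem integral_divergence_eq_zero {u : E → E} (hu : ContDiff ℝ 1 u) (huc : HasCompactSupport u) :
    ∫ x, divergence u x ∂μ = 0 := by
  let b := Module.finBasis ℝ E
  have hcoord (i) : ContDiff ℝ 1 fun y ↦ b.coord i (u y) :=
    (b.coord i).toContinuousLinearMap.contDiff.comp hu
  have hcoordc (i) : HasCompactSupport fun y ↦ b.coord i (u y) :=
    huc.comp_left (map_zero (b.coord i))
  have hint (i) : Integrable (fun x ↦ fderiv ℝ (fun y ↦ b.coord i (u y)) x (b i)) μ :=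
    (((hcoord i).continuous_fderiv one_ne_zero).clm_apply
      continuous_const).integrable_of_hasCompactSupport ((hcoordc i).fderiv_apply ℝ (b i))
  simp_rw [divergence_eq_sum_fderiv_coord b (hu.differentiable one_ne_zero _)]
  rw [integral_finsetSum _ fun i _ ↦ hint i]
  exact Finset.sum_eq_zero fun i _ ↦ integral_fderiv_apply_eq_zero (hcoord i) (hcoordc i) (b i)

theorem integral_fderiv_apply_eq_neg_integral_mul_divergence {ψ : E → ℝ} {u : E → E}
    (hψ : ContDiff ℝ 1 ψ) (hψc : HasCompactSupport ψ) (hu : ContDiff ℝ 1 u) :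
    ∫ x, fderiv ℝ ψ x (u x) ∂μ = -∫ x, ψ x * divergence u x ∂μ := by
  have hzero : ∫ x, divergence (ψ • u) x ∂μ = 0 :=
    integral_divergence_eq_zero (hψ.smul hu) hψc.smul_right
  have hdiv : Integrable (fun x ↦ ψ x * divergence u x) μ :=
    (hψ.continuous.mul (continuous_divergence hu)).integrable_of_hasCompactSupport hψc.mul_right
  have hderiv : Integrable (fun x ↦ fderiv ℝ ψ x (u x)) μ :=
    ((hψ.continuous_fderiv one_ne_zero).clm_apply hu.continuous).integrable_of_hasCompactSupport <|
      (hψc.fderiv ℝ).mono fun x hx h ↦ hx <| by simp [h]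
  simp_rw [divergence_smul (hψ.differentiable one_ne_zero _) (hu.differentiable one_ne_zero _)]
    at hzero
  rw [integral_add hdiv hderiv] at hzero
  linarith

end Divergence

/-- `X` is a global flow of the time-dependent vector field `v`: the curve `t ↦ X t s x` solves
`y' = v t y` with `y s = x`, and `X` satisfies the cocycle identity. The first argument of `X` is
the final time and the second one the initial time, as in the notation `X_{t,s}`. -/
structure IsGlobalFlow {E : Type*} [NormedAddCommGroup E] [NormedSpace ℝ E] (v : ℝ → E → E)
    (X : ℝ → ℝ → E → E) : Prop where
  hasDerivAt : ∀ s x t, HasDerivAt (fun τ ↦ X τ s x) (v t (X t s x)) t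
  self : ∀ s x, X s s x = x
  cocycle : ∀ t s r x, X t s (X s r x) = X t r x

namespace IsGlobalFlow

variable {E : Type*} [NormedAddCommGroup E] [NormedSpace ℝ E] {v : ℝ → E → E} {X : ℝ → ℝ → E → E}

lemma inverse (hX : IsGlobalFlow v X) (s t : ℝ) (x : E) : X s t (X t s x) = x := by
  rw [hX.cocycle, hX.self]

/-- The time-`t` map of a continuous global flow started at time `s`, with inverse `X s t`. -/
def homeomorph (hX : IsGlobalFlow v X) (hX_cont : ∀ t s, Continuous (X t s)) (t s : ℝ) :
    E ≃ₜ E where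
  toFun := X t s
  invFun := X s t
  left_inv := hX.inverse s t
  right_inv := hX.inverse t s
  continuous_toFun := hX_cont t s
  continuous_invFun := hX_cont s t

lemma image_eq_preimage (hX : IsGlobalFlow v X) (t s : ℝ) (A : Set E) :
    X t s '' A = X s t ⁻¹' A :=
  congrFun (image_eq_preimage_of_inverse (hX.inverse s t) (hX.inverse t s)) A

section ProperSpace

variable [ProperSpace E]

lemma exists_eventually_norm_sub_le (hX : IsGlobalFlow v X) (hv : Continuous (uncurry v)) (s : ℝ)
    {K : Set E} (hK : IsCompact K) :
    ∃ M, ∀ᶠ p : ℝ × ℝ in 𝓝 (s, s), ∀ x ∈ K, ‖X p.1 p.2 x - x‖ ≤ M * |p.1 - p.2| := by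
  obtain ⟨C, hC⟩ := ((isCompact_closedBall s 1).prod
    (hK.cthickening (r := 1))).exists_bound_of_continuousOn hv.continuousOn
  have hsmall : Tendsto (fun p : ℝ × ℝ ↦ (|C| + 1) * |p.1 - p.2|) (𝓝 (s, s)) (𝓝 0) :=
    Continuous.tendsto' (by fun_prop) _ _ (by simp)
  refine ⟨|C| + 1, ?_⟩
  filter_upwards [hsmall.eventually_le_const one_pos, closedBall_mem_nhds (s, s) one_pos]
    with ⟨t, a⟩ hta hmem x hx
  rw [← closedBall_prod_same] at hmem
  have hbound := norm_sub_le_of_norm_deriv_lt_on_closedBall (by positivity)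
    (fun τ _ ↦ hX.hasDerivAt a x τ) (r := 1) (M := |C| + 1) (b := t) (fun τ hτ hball ↦ ?_) hta
  · simpa only [hX.self] using hbound
  · rw [hX.self] at hball
    have hτs : τ ∈ closedBall s 1 := (convex_closedBall s 1).ordConnected.uIcc_subset
      hmem.2 hmem.1 hτ
    exact (hC (τ, X τ a x) ⟨hτs, closedBall_subset_cthickening hx 1 hball⟩).trans_lt
      (lt_of_le_of_lt (le_abs_self C) (lt_add_one _))

lemma tendsto_nhds_self (hX : IsGlobalFlow v X) (hv : Continuous (uncurry v)) (s : ℝ) (x : E) :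
    Tendsto (fun p : ℝ × ℝ ↦ X p.1 p.2 x) (𝓝 (s, s)) (𝓝 x) := by
  obtain ⟨M, hM⟩ := hX.exists_eventually_norm_sub_le hv s (isCompact_singleton (x := x))
  rw [tendsto_iff_norm_sub_tendsto_zero]
  refine squeeze_zero' (.of_forall fun _ ↦ norm_nonneg _) (hM.mono fun p hp ↦ hp x rfl) ?_
  exact Continuous.tendsto' (by fun_prop) _ _ (by simp)

lemma eventually_norm_velocity_sub_le (hX : IsGlobalFlow v X) (hv : Continuous (uncurry v)) (s : ℝ)
    (x : E) {ε : ℝ} (hε : 0 < ε) :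
    ∀ᶠ a in 𝓝 s, ∀ τ ∈ uIcc s a, ‖v τ (X τ a x) - v s x‖ ≤ ε := by
  have hvel : Tendsto (fun p : ℝ × ℝ ↦ v p.1 (X p.1 p.2 x)) (𝓝 (s, s)) (𝓝 (v s x)) :=
    hv.continuousAt.tendsto.comp <|
      continuousAt_fst.tendsto.prodMk_nhds (hX.tendsto_nhds_self hv s x)
  obtain ⟨δ, hδ, hclose⟩ := Metric.eventually_nhds_iff.1
    (hvel.eventually (closedBall_mem_nhds (v s x) hε))
  filter_upwards [ball_mem_nhds s hδ] with a ha τ hτ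
  rw [← dist_eq_norm]
  refine hclose (y := (τ, a)) (max_lt ?_ ha)
  exact (convex_ball s δ).ordConnected.uIcc_subset (mem_ball_self hδ) ha hτ

-- `X s a x - x` is minus the integral of `v τ (X τ a x)` over `τ` from `s` to `a`.
lemma hasDerivAt_initialTime (hX : IsGlobalFlow v X) (hv : Continuous (uncurry v)) (s : ℝ) (x : E) :
    HasDerivAt (fun a ↦ X s a x) (-v s x) s := by
  rw [hasDerivAt_iff_isLittleO, Asymptotics.isLittleO_iff]
  intro ε hε
  filter_upwards [hX.eventually_norm_velocity_sub_le hv s x hε] with a ha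
  have hderiv (τ : ℝ) :
      HasDerivAt (fun τ ↦ X τ a x - τ • v s x) (v τ (X τ a x) - v s x) τ :=
    (hX.hasDerivAt a x τ).sub (by simpa using (hasDerivAt_id τ).smul_const (v s x))
  have hmvt := (convex_uIcc s a).norm_image_sub_le_of_norm_hasDerivWithin_le
    (fun τ _ ↦ (hderiv τ).hasDerivWithinAt) ha right_mem_uIcc left_mem_uIcc
  rw [norm_sub_rev s a] at hmvt
  simp only [hX.self] at hmvt ⊢
  convert hmvt using 2
  module

variable [MeasurableSpace E] [BorelSpace E] {μ : Measure E}

lemma exists_integrable_lipschitz_bound [IsFiniteMeasureOnCompacts μ] (hX : IsGlobalFlow v X)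
    (hv : Continuous (uncurry v)) {ψ : E → ℝ} {C : NNReal} (hψ : LipschitzWith C ψ)
    (hψc : HasCompactSupport ψ) (s : ℝ) :
    ∃ bound : E → ℝ, Integrable bound μ ∧
      ∀ᶠ a in 𝓝 s, ∀ x, ‖ψ (X s a x) - ψ x‖ ≤ bound x * ‖a - s‖ := by
  let L := cthickening 1 (tsupport ψ)
  have hL : IsCompact L := hψc.isCompact.cthickening
  obtain ⟨M, hM⟩ := hX.exists_eventually_norm_sub_le hv s hL
  refine ⟨L.indicator fun _ ↦ C * M,
    (integrable_indicator_iff hL.measurableSet).2 (integrableOn_const hL.measure_ne_top), ?_⟩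
  have hforward : Tendsto (fun a : ℝ ↦ (a, s)) (𝓝 s) (𝓝 (s, s)) :=
    Continuous.tendsto' (by fun_prop) _ _ rfl
  have hbackward : Tendsto (fun a : ℝ ↦ (s, a)) (𝓝 s) (𝓝 (s, s)) :=
    Continuous.tendsto' (by fun_prop) _ _ rfl
  have hsmall : Tendsto (fun a : ℝ ↦ M * |a - s|) (𝓝 s) (𝓝 0) :=
    Continuous.tendsto' (by fun_prop) _ _ (by simp)
  filter_upwards [hforward.eventually hM, hbackward.eventually hM,
    hsmall.eventually_le_const one_pos] with a hfwd hbwd hle x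
  by_cases hx : x ∈ L
  · rw [indicator_of_mem hx]
    calc ‖ψ (X s a x) - ψ x‖ ≤ C * ‖X s a x - x‖ := hψ.norm_sub_le _ _
      _ ≤ C * (M * |s - a|) := by gcongr; exact hbwd x hx
      _ = C * M * ‖a - s‖ := by rw [Real.norm_eq_abs, abs_sub_comm, mul_assoc]
  · have hzero : ψ x = 0 :=
      image_eq_zero_of_notMem_tsupport fun h ↦ hx (self_subset_cthickening _ h)
    have hzero' : ψ (X s a x) = 0 := by
      refine image_eq_zero_of_notMem_tsupport fun h ↦ hx ?_
      have hback := (hfwd _ (self_subset_cthickening _ h)).trans hle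
      rw [hX.inverse] at hback
      exact closedBall_subset_cthickening h 1 (mem_closedBall_iff_norm.2 hback)
    simp [hzero, hzero', hx]

lemma hasDerivAt_integral_comp_initialTime [IsFiniteMeasureOnCompacts μ] (hX : IsGlobalFlow v X)
    (hv : Continuous (uncurry v)) (hX_cont : ∀ t s, Continuous (X t s)) {ψ : E → ℝ}
    (hψ : ContDiff ℝ 1 ψ) (hψc : HasCompactSupport ψ) (s : ℝ) :
    HasDerivAt (fun a ↦ ∫ x, ψ (X s a x) ∂μ) (-∫ x, fderiv ℝ ψ x (v s x) ∂μ) s := by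
  obtain ⟨C, hC⟩ := hψ.lipschitzWith_of_hasCompactSupport hψc one_ne_zero
  obtain ⟨bound, hbound_int, hbound⟩ := hX.exists_integrable_lipschitz_bound (μ := μ) hv hC hψc s
  have hvs : Continuous (v s) := hv.comp (by fun_prop : Continuous fun x ↦ (s, x))
  have hψ' : Continuous fun x ↦ fderiv ℝ ψ x (v s x) :=
    (hψ.continuous_fderiv one_ne_zero).clm_apply hvs
  have hderiv (x : E) : HasDerivAt (fun a ↦ ψ (X s a x)) (-fderiv ℝ ψ x (v s x)) s := by
    have hψx : HasFDerivAt ψ (fderiv ℝ ψ x) (X s s x) := by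
      rw [hX.self]
      exact (hψ.differentiable one_ne_zero x).hasFDerivAt
    have hcomp := hψx.comp_hasDerivAt s (hX.hasDerivAt_initialTime hv s x)
    rwa [map_neg] at hcomp
  rw [← integral_neg]
  exact hasDerivAt_integral_of_dominated_loc_of_norm_sub_le (f := fun a x ↦ ψ (X s a x)) hbound
    (fun a _ ↦ (hψ.continuous.comp (hX_cont s a)).aestronglyMeasurable)
    (by simpa only [hX.self] using hψ.continuous.integrable_of_hasCompactSupport hψc)
    hψ'.neg.aestronglyMeasurable
    (.of_forall fun x a ha ↦ by simpa only [hX.self] using ha x)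
    hbound_int (.of_forall hderiv)

end ProperSpace

section Haar

variable [FiniteDimensional ℝ E] [MeasurableSpace E] [BorelSpace E] {μ : Measure E}
  [μ.IsAddHaarMeasure]

theorem hasDerivAt_integral_comp (hX : IsGlobalFlow v X) (hv : Continuous (uncurry v))
    (hv_C1 : ∀ t, ContDiff ℝ 1 (v t)) (hX_C1 : ∀ t s, ContDiff ℝ 1 (X t s)) {φ : E → ℝ}
    (hφ : ContDiff ℝ 1 φ) (hφc : HasCompactSupport φ) (t a : ℝ) :
    HasDerivAt (fun a ↦ ∫ x, φ (X t a x) ∂μ) (∫ x, φ (X t a x) * divergence (v a) x ∂μ) a := by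
  have : ProperSpace E := FiniteDimensional.proper_real E
  have hX_cont (t s) : Continuous (X t s) := (hX_C1 t s).continuous
  have hψ : ContDiff ℝ 1 fun x ↦ φ (X t a x) := hφ.comp (hX_C1 t a)
  have hψc : HasCompactSupport fun x ↦ φ (X t a x) :=
    hφc.comp_homeomorph (hX.homeomorph hX_cont t a)
  have hderiv := hX.hasDerivAt_integral_comp_initialTime (μ := μ) hv hX_cont hψ hψc a
  rw [integral_fderiv_apply_eq_neg_integral_mul_divergence hψ hψc (hv_C1 a), neg_neg] at hderiv
  simpa only [hX.cocycle] using hderiv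

lemma integral_comp_le (hX : IsGlobalFlow v X) (hv : Continuous (uncurry v))
    (hv_C1 : ∀ t, ContDiff ℝ 1 (v t)) (hX_C1 : ∀ t s, ContDiff ℝ 1 (X t s)) {D : ℝ}
    (hdiv : ∀ t x, |divergence (v t) x| ≤ D) {φ : E → ℝ} (hφ : ContDiff ℝ 1 φ)
    (hφc : HasCompactSupport φ) (hφ0 : 0 ≤ φ) (t s : ℝ) :
    ∫ x, φ (X t s x) ∂μ ≤ Real.exp (|t - s| * D) * ∫ x, φ x ∂μ := by
  have hint (a) : Integrable (fun x ↦ φ (X t a x)) μ :=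
    (hφ.continuous.comp (hX_C1 t a).continuous).integrable_of_hasCompactSupport <|
      hφc.comp_homeomorph (hX.homeomorph (fun t s ↦ (hX_C1 t s).continuous) t a)
  have hnorm (a) : ‖∫ x, φ (X t a x) ∂μ‖ = ∫ x, φ (X t a x) ∂μ :=
    Real.norm_of_nonneg (integral_nonneg fun x ↦ hφ0 (X t a x))
  have hderiv_le (a) :
      ‖∫ x, φ (X t a x) * divergence (v a) x ∂μ‖ ≤ D * ‖∫ x, φ (X t a x) ∂μ‖ := by
    rw [hnorm, ← integral_const_mul]
    refine norm_integral_le_of_norm_le ((hint a).const_mul D) (.of_forall fun x ↦ ?_)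
    rw [norm_mul, Real.norm_of_nonneg (hφ0 _), mul_comm]
    exact mul_le_mul_of_nonneg_right (hdiv a x) (hφ0 _)
  have hgronwall := norm_le_exp_mul_norm_of_norm_deriv_le
    (hX.hasDerivAt_integral_comp hv hv_C1 hX_C1 hφ hφc t) hderiv_le t s
  rw [hnorm, hnorm, abs_sub_comm] at hgronwall
  simpa only [hX.self] using hgronwall

theorem map_le_smul (hX : IsGlobalFlow v X) (hv : Continuous (uncurry v))
    (hv_C1 : ∀ t, ContDiff ℝ 1 (v t)) (hX_C1 : ∀ t s, ContDiff ℝ 1 (X t s)) {D : ℝ}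
    (hdiv : ∀ t x, |divergence (v t) x| ≤ D) (t s : ℝ) :
    μ.map (X t s) ≤ ENNReal.ofReal (Real.exp (|t - s| * D)) • μ := by
  let e := hX.homeomorph (fun t s ↦ (hX_C1 t s).continuous) t s
  have : IsFiniteMeasureOnCompacts (μ.map (X t s)) :=
    Measure.IsFiniteMeasureOnCompacts.map μ e
  have : IsFiniteMeasureOnCompacts (ENNReal.ofReal (Real.exp (|t - s| * D)) • μ) :=
    .smul μ ENNReal.ofReal_ne_top
  refine measure_le_of_integral_contDiff_le (n := 1) fun φ hφ hφc hφ0 ↦ ?_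
  have hmap : ∫ x, φ x ∂μ.map (X t s) = ∫ x, φ (X t s x) ∂μ := e.measurableEmbedding.integral_map φ
  rw [hmap, integral_smul_measure, ENNReal.toReal_ofReal (Real.exp_nonneg _)]
  exact hX.integral_comp_le hv hv_C1 hX_C1 hdiv hφ hφc hφ0 t s

theorem measure_image_le (hX : IsGlobalFlow v X) (hv : Continuous (uncurry v))
    (hv_C1 : ∀ t, ContDiff ℝ 1 (v t)) (hX_C1 : ∀ t s, ContDiff ℝ 1 (X t s)) {D : ℝ}
    (hdiv : ∀ t x, |divergence (v t) x| ≤ D) (s t : ℝ) (A : Set E) :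
    μ (X s t '' A) ≤ ENNReal.ofReal (Real.exp (|t - s| * D)) * μ A := by
  let e := hX.homeomorph (fun t s ↦ (hX_C1 t s).continuous) t s
  calc μ (X s t '' A) = μ.map (X t s) A := by
        rw [hX.image_eq_preimage]
        exact (e.measurableEmbedding.map_apply μ A).symm
    _ ≤ ENNReal.ofReal (Real.exp (|t - s| * D)) * μ A :=
        hX.map_le_smul hv hv_C1 hX_C1 hdiv t s A

end Haar

end IsGlobalFlow

theorem flow_measure_distortion_bounds_general {E : Type*} [NormedAddCommGroup E]
    [NormedSpace ℝ E] [FiniteDimensional ℝ E] [MeasurableSpace E] [BorelSpace E] (μ : Measure E)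
    [μ.IsAddHaarMeasure] {v : ℝ → E → E} {X : ℝ → ℝ → E → E} (hX : IsGlobalFlow v X)
    (hv : Continuous (uncurry v)) (hv_C1 : ∀ t, ContDiff ℝ 1 (v t)) {D : ℝ}
    (hdiv : ∀ t x, |divergence (v t) x| ≤ D) (hX_C1 : ∀ t s, ContDiff ℝ 1 (X t s)) (s t : ℝ)
    (A : Set E) :
    ENNReal.ofReal (Real.exp (-(|t - s| * D))) * μ A ≤ μ (X s t '' A) ∧
      μ (X s t '' A) ≤ ENNReal.ofReal (Real.exp (|t - s| * D)) * μ A := by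
  refine ⟨?_, hX.measure_image_le hv hv_C1 hX_C1 hdiv s t A⟩
  have hreturn := hX.measure_image_le (μ := μ) hv hv_C1 hX_C1 hdiv t s (X s t '' A)
  rw [LeftInverse.image_image (hX.inverse t s), abs_sub_comm] at hreturn
  calc ENNReal.ofReal (Real.exp (-(|t - s| * D))) * μ A
      ≤ ENNReal.ofReal (Real.exp (-(|t - s| * D))) *
          (ENNReal.ofReal (Real.exp (|t - s| * D)) * μ (X s t '' A)) := by gcongr
    _ = μ (X s t '' A) := by
      rw [← mul_assoc, ← ENNReal.ofReal_mul (Real.exp_nonneg _), ← Real.exp_add]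
      simp

/-- **Measure distortion of the characteristic flow.**  If `v` is a continuous time-dependent
vector field on `ℝ^d`, `C¹` in space, with `|div_x v| ≤ D`, and `X` is a global flow of `v`
such that each `X_{t,s}` is a `C¹`-diffeomorphism of `ℝ^d` with inverse `X_{s,t}`, then for
all `s, t` and every measurable `E ⊆ ℝ^d`,
`e^{-|t-s| D} λ(E) ≤ λ(X_{s,t}(E)) ≤ e^{|t-s| D} λ(E)`. -/
theorem flow_measure_distortion_bounds
    {d : ℕ} (v : ℝ → EuclideanSpace ℝ (Fin d) → EuclideanSpace ℝ (Fin d))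
    (hv_cont : Continuous (fun q : ℝ × EuclideanSpace ℝ (Fin d) => v q.1 q.2))
    (hv_C1 : ∀ t : ℝ, ContDiff ℝ 1 (v t))
    (D : ℝ)
    (hdiv : ∀ (t : ℝ) (x : EuclideanSpace ℝ (Fin d)),
      |LinearMap.trace ℝ (EuclideanSpace ℝ (Fin d))
        ((fderiv ℝ (v t) x : EuclideanSpace ℝ (Fin d) →L[ℝ] EuclideanSpace ℝ (Fin d)) :
          EuclideanSpace ℝ (Fin d) →ₗ[ℝ] EuclideanSpace ℝ (Fin d))| ≤ D)
    (X : ℝ → ℝ → EuclideanSpace ℝ (Fin d) → EuclideanSpace ℝ (Fin d))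
    (hX_deriv : ∀ (s : ℝ) (x : EuclideanSpace ℝ (Fin d)) (t : ℝ),
      HasDerivAt (fun τ => X τ s x) (v t (X t s x)) t)
    (hX_init : ∀ (s : ℝ) (x : EuclideanSpace ℝ (Fin d)), X s s x = x)
    (hX_cocycle : ∀ (t s r : ℝ) (x : EuclideanSpace ℝ (Fin d)),
      X t s (X s r x) = X t r x)
    (hX_C1 : ∀ t s : ℝ, ContDiff ℝ 1 (X t s)) :
    ∀ (s t : ℝ) (E : Set (EuclideanSpace ℝ (Fin d))), MeasurableSet E →
      ENNReal.ofReal (Real.exp (-(|t - s| * D))) * volume E ≤ volume (X s t '' E) ∧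
      volume (X s t '' E) ≤ ENNReal.ofReal (Real.exp (|t - s| * D)) * volume E :=
  fun s t E _ ↦ flow_measure_distortion_bounds_general volume ⟨hX_deriv, hX_init, hX_cocycle⟩
    hv_cont hv_C1 hdiv hX_C1 s t E
end

section
/- Let U be a strictly positive bounded linear operator on X = L^p(E, μ) with spectral radius r(U) > 0, and let φ₀ ∈ X'₊ \ {0} satisfy U* φ₀ = r(U) φ₀. Then every f ∈ X \ {0} with U f = r(U) f satisfies U |f| = r(U) |f|, and either f > 0 a.e. or −f > 0 a.e. -/
/-!
A nonzero positive functional `φ₀` is strictly positive on a.e. positive functions `h`, because the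
truncations `k ⊓ n h` converge to `k` in `L^p` for every `k ≥ 0`. Hence `φ₀ ∘ U` is strictly
positive. If `U f = r f` then `r f⁺ ≤ U f⁺`, and `φ₀` vanishes on the nonnegative difference
`d = U f⁺ - r f⁺`; so `φ₀ (U d) = r φ₀ d = 0`, which forces `d = 0`. Thus `f⁺` and `f⁻` are
eigenfunctions (or zero), and strict positivity of `U` makes whichever is nonzero positive a.e.
-/

open MeasureTheory Filter ENNReal

open scoped Topology

section EigenvectorParts

theorem map_eq_smul_of_smul_le_map {R V : Type*} [Ring R] [Preorder R] [AddCommGroup V]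
    [PartialOrder V] [IsOrderedAddMonoid V] [Module R V] {T : V →ₗ[R] V} {φ : V →ₗ[R] R} {r : R}
    {f : V} (hφ : ∀ g, φ (T g) = r * φ g) (hφT : ∀ g, 0 ≤ g → g ≠ 0 → 0 < φ (T g))
    (hle : r • f ≤ T f) : T f = r • f := by
  by_contra hne
  have hpos : 0 < φ (T (T f - r • f)) := hφT _ (sub_nonneg.2 hle) (sub_ne_zero.2 hne)
  have hzero : φ (T f - r • f) = 0 := by rw [map_sub, map_smul, hφ, smul_eq_mul, sub_self]
  rw [hφ, hzero, mul_zero] at hpos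
  exact hpos.false

variable {𝕜 V : Type*} [Field 𝕜] [LinearOrder 𝕜] [IsStrictOrderedRing 𝕜] [AddCommGroup V]
  [Lattice V] [Module 𝕜 V] [PosSMulMono 𝕜 V] {T : V →ₗ[𝕜] V} {φ : V →ₗ[𝕜] 𝕜} {r : 𝕜} {f : V}

theorem smul_posPart_le_map_posPart (hT : Monotone T) (hr : 0 < r) (hf : T f = r • f) :
    r • f⁺ ≤ T f⁺ := by
  rw [← le_inv_smul_iff_of_pos hr]
  refine sup_le ?_ (smul_nonneg (inv_nonneg.2 hr.le) ?_)
  · rw [le_inv_smul_iff_of_pos hr, ← hf]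
    exact hT (le_posPart f)
  · simpa only [map_zero] using hT (posPart_nonneg f)

variable [IsOrderedAddMonoid V]

theorem map_posPart_eq_smul_posPart (hT : Monotone T) (hr : 0 < r)
    (hφ : ∀ g, φ (T g) = r * φ g) (hφT : ∀ g, 0 ≤ g → g ≠ 0 → 0 < φ (T g))
    (hf : T f = r • f) : T f⁺ = r • f⁺ :=
  map_eq_smul_of_smul_le_map hφ hφT (smul_posPart_le_map_posPart hT hr hf)

theorem map_negPart_eq_smul_negPart (hT : Monotone T) (hr : 0 < r)
    (hφ : ∀ g, φ (T g) = r * φ g) (hφT : ∀ g, 0 ≤ g → g ≠ 0 → 0 < φ (T g))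
    (hf : T f = r • f) : T f⁻ = r • f⁻ := by
  rw [← posPart_neg]
  exact map_posPart_eq_smul_posPart hT hr hφ hφT (by rw [map_neg, hf, smul_neg])

end EigenvectorParts

section QuasiInterior

variable {V : Type*} [AddCommGroup V] [Lattice V] [TopologicalSpace V]

/-- `u` is a quasi-interior point of the positive cone: the truncations `k ⊓ n u` of every `k ≥ 0`
converge to `k`. In a normed lattice this says that `0 ≤ u` (take `k = 0`) and that the order ideal
generated by `u` is dense. -/
def IsQuasiInterior (u : V) : Prop :=
  ∀ k, 0 ≤ k → Tendsto (fun n : ℕ => k ⊓ n • u) atTop (𝓝 k)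

theorem IsQuasiInterior.map_pos {R : Type*} [Ring R] [LinearOrder R] [IsOrderedAddMonoid R]
    [TopologicalSpace R] [ClosedIicTopology R] [IsOrderedAddMonoid V] [Module R V] {u : V}
    (hu : IsQuasiInterior u) {φ : V →L[R] R} (hφ : Monotone φ) (hφ0 : φ ≠ 0) : 0 < φ u := by
  by_contra! hle
  have hzero (k : V) (hk : 0 ≤ k) : φ k = 0 := by
    refine le_antisymm ?_ (by simpa only [map_zero] using hφ hk)
    refine le_of_tendsto' ((φ.continuous.tendsto k).comp (hu k hk)) fun n => ?_
    calc φ (k ⊓ n • u) ≤ φ (n • u) := hφ inf_le_right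
      _ = n • φ u := map_nsmul φ n u
      _ ≤ 0 := nsmul_nonpos hle n
  refine hφ0 (ContinuousLinearMap.ext fun f => ?_)
  rw [← posPart_sub_negPart f, map_sub, hzero _ (posPart_nonneg f), hzero _ (negPart_nonneg f),
    sub_self, zero_apply]

end QuasiInterior

section Lp

variable {α : Type*} [MeasurableSpace α] {μ : Measure α} {p : ℝ≥0∞}

instance instPosSMulMonoLp {E : Type*} [NormedAddCommGroup E] [NormedSpace ℝ E] [PartialOrder E]
    [PosSMulMono ℝ E] :
    PosSMulMono ℝ (Lp E p μ) where
  smul_le_smul_of_nonneg_left c hc f g hfg := by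
    rw [← Lp.coeFn_le] at hfg ⊢
    filter_upwards [hfg, Lp.coeFn_smul c f, Lp.coeFn_smul c g] with x hx hf hg
    rw [hf, hg]
    exact smul_le_smul_of_nonneg_left hx hc

theorem tendsto_Lp_of_dominated {E : Type*} [NormedAddCommGroup E] [Fact (1 ≤ p)] (hp : p ≠ ∞)
    {F : ℕ → Lp E p μ} {f : Lp E p μ} {g : α → ℝ} (hg : MemLp g p μ)
    (hbound : ∀ n, ∀ᵐ x ∂μ, ‖F n x‖ ≤ g x)
    (hlim : ∀ᵐ x ∂μ, Tendsto (fun n => F n x) atTop (𝓝 (f x))) :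
    Tendsto F atTop (𝓝 f) := by
  have hp0 : p ≠ 0 := (one_pos.trans_le (Fact.out : 1 ≤ p)).ne'
  have hp_pos : 0 < p.toReal := ENNReal.toReal_pos hp0 hp
  have hsub : ∀ n, ∀ᵐ x ∂μ, ‖F n x - f x‖ₑ ^ p.toReal ≤ ‖((2 : ℝ) • g) x‖ₑ ^ p.toReal := by
    intro n
    filter_upwards [ae_all_iff.2 hbound, hlim] with x hFg hFf
    have hfg : ‖f x‖ ≤ g x := le_of_tendsto' hFf.norm hFg
    refine ENNReal.rpow_le_rpow (enorm_le_iff_norm_le.2 ?_) hp_pos.le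
    calc ‖F n x - f x‖ ≤ ‖F n x‖ + ‖f x‖ := norm_sub_le _ _
      _ ≤ 2 * g x := by linarith [hFg n]
      _ ≤ ‖((2 : ℝ) • g) x‖ := le_abs_self _
  have hlim_rpow : ∀ᵐ x ∂μ,
      Tendsto (fun n => ‖F n x - f x‖ₑ ^ p.toReal) atTop (𝓝 0) := by
    filter_upwards [hlim] with x hx
    have henorm := (hx.sub_const (f x)).enorm.ennrpow_const p.toReal
    rwa [sub_self, enorm_zero, ENNReal.zero_rpow_of_pos hp_pos] at henorm
  have hlintegral : Tendsto (fun n => ∫⁻ x, ‖F n x - f x‖ₑ ^ p.toReal ∂μ) atTop (𝓝 0) := by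
    rw [← lintegral_zero (μ := μ)]
    refine tendsto_lintegral_of_dominated_convergence' _ (fun n => ?_) hsub ?_ hlim_rpow
    · exact ((Lp.aestronglyMeasurable _).sub (Lp.aestronglyMeasurable _)).enorm.pow_const _
    · exact (lintegral_rpow_enorm_lt_top_of_eLpNorm_lt_top hp0 hp (hg.const_smul 2).2).ne
  rw [Lp.tendsto_Lp_iff_tendsto_eLpNorm']
  simp only [eLpNorm_eq_lintegral_rpow_enorm_toReal hp0 hp, Pi.sub_apply]
  have hroot := hlintegral.ennrpow_const (1 / p.toReal)
  rwa [ENNReal.zero_rpow_of_pos (one_div_pos.2 hp_pos)] at hroot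

theorem isQuasiInterior_of_ae_pos [Fact (1 ≤ p)] (hp : p ≠ ∞) {h : Lp ℝ p μ}
    (hh : ∀ᵐ x ∂μ, 0 < h x) : IsQuasiInterior h := by
  intro k hk
  have hcoe (n : ℕ) : ∀ᵐ x ∂μ, (k ⊓ n • h : Lp ℝ p μ) x = min (k x) (n * h x) := by
    rw [← Nat.cast_smul_eq_nsmul ℝ]
    filter_upwards [Lp.coeFn_inf k ((n : ℝ) • h), Lp.coeFn_smul (n : ℝ) h] with x hinf hsmul
    rw [hinf, Pi.inf_apply, hsmul, Pi.smul_apply, smul_eq_mul]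
  refine tendsto_Lp_of_dominated hp (Lp.memLp k) (fun n => ?_) ?_
  · filter_upwards [hcoe n, (Lp.coeFn_nonneg k).2 hk, hh] with x hx hkx hhx
    rw [hx, Real.norm_of_nonneg (le_min hkx (by positivity))]
    exact min_le_left _ _
  · filter_upwards [ae_all_iff.2 hcoe, hh] with x hx hhx
    obtain ⟨N, hN⟩ := exists_nat_ge (k x / h x)
    refine tendsto_atTop_of_eventually_const (i₀ := N) fun n hn => ?_
    rw [hx, min_eq_left]
    exact (div_le_iff₀ hhx).1 (hN.trans (Nat.cast_le.2 hn))

theorem ae_pos_of_ae_pos_smul_posPart {r : ℝ} {f : Lp ℝ p μ}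
    (h : ∀ᵐ x ∂μ, 0 < (r • f⁺ : Lp ℝ p μ) x) : ∀ᵐ x ∂μ, 0 < f x := by
  filter_upwards [h, Lp.coeFn_smul r f⁺, Lp.coeFn_sup f 0, Lp.coeFn_zero ℝ p μ]
    with x hpos hsmul hsup hzero
  by_contra! hfx
  rw [hsmul, Pi.smul_apply, posPart_def, hsup, Pi.sup_apply, hzero, Pi.zero_apply,
    sup_eq_right.2 hfx, smul_zero] at hpos
  exact hpos.false

theorem monotone_of_map_ae_pos {U : Lp ℝ p μ →ₗ[ℝ] Lp ℝ p μ}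
    (hU : ∀ f : Lp ℝ p μ, 0 ≤ f → f ≠ 0 → ∀ᵐ x ∂μ, 0 < (U f) x) : Monotone U := by
  refine (monotone_iff_map_nonneg U).2 fun f hf => ?_
  rcases eq_or_ne f 0 with rfl | hf0
  · rw [map_zero]
  · rw [← Lp.coeFn_nonneg]
    filter_upwards [hU f hf hf0] with x hx using hx.le

end Lp

theorem eigenfunction_abs_and_sign_general
    {α : Type*} [MeasurableSpace α] {μ : Measure α} {p : ℝ≥0∞} [Fact (1 ≤ p)] (hp : p ≠ ∞)
    (U : Lp ℝ p μ →ₗ[ℝ] Lp ℝ p μ)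
    (hstrict : ∀ f : Lp ℝ p μ, 0 ≤ f → f ≠ 0 → ∀ᵐ x ∂μ, 0 < (U f) x)
    (r : ℝ) (φ₀ : Lp ℝ p μ →L[ℝ] ℝ) (hφ₀pos : ∀ f, 0 ≤ f → 0 ≤ φ₀ f) (hφ₀ne : φ₀ ≠ 0)
    (hφ₀ : ∀ f, φ₀ (U f) = r * φ₀ f) (f : Lp ℝ p μ) (hf : f ≠ 0) (hUf : U f = r • f) :
    U |f| = r • |f| ∧ ((∀ᵐ x ∂μ, 0 < f x) ∨ (∀ᵐ x ∂μ, f x < 0)) := by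
  have hU : Monotone U := monotone_of_map_ae_pos hstrict
  have hφU (g : Lp ℝ p μ) (hg : 0 ≤ g) (hg0 : g ≠ 0) : 0 < φ₀ (U g) :=
    (isQuasiInterior_of_ae_pos hp (hstrict g hg hg0)).map_pos
      ((monotone_iff_map_nonneg φ₀).2 hφ₀pos) hφ₀ne
  have habs : |f| ≠ 0 := fun h => hf (norm_eq_zero.1 (by rw [← norm_abs_eq_norm, h, norm_zero]))
  have hr : 0 < r := by
    refine pos_of_mul_pos_left ?_ (hφ₀pos |f| (abs_nonneg f))
    rw [← hφ₀]
    exact hφU _ (abs_nonneg f) habs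
  have hUpos : U f⁺ = r • f⁺ := map_posPart_eq_smul_posPart (φ := φ₀.toLinearMap) hU hr hφ₀ hφU hUf
  have hUneg : U f⁻ = r • f⁻ := map_negPart_eq_smul_negPart (φ := φ₀.toLinearMap) hU hr hφ₀ hφU hUf
  refine ⟨by rw [← posPart_add_negPart, map_add, hUpos, hUneg, smul_add], ?_⟩
  by_cases hf0 : f⁺ = 0
  · have hneg0 : f⁻ ≠ 0 := fun h => hf (by rw [← posPart_sub_negPart f, hf0, h, sub_zero])
    have hneg : ∀ᵐ x ∂μ, 0 < (-f : Lp ℝ p μ) x :=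
      ae_pos_of_ae_pos_smul_posPart (r := r) <| by
        rw [posPart_neg, ← hUneg]
        exact hstrict _ (negPart_nonneg f) hneg0
    right
    filter_upwards [hneg, Lp.coeFn_neg f] with x hx hcoe
    rwa [hcoe, Pi.neg_apply, neg_pos] at hx
  · exact .inl (ae_pos_of_ae_pos_smul_posPart (hUpos ▸ hstrict _ (posPart_nonneg f) hf0))

/-- **From the proof of Theorem 2.2 ii).**  Let `U` be a strictly positive bounded operator
on `X = L^p(E, μ)` with spectral radius `r(U) > 0` (Gelfand formula), and let
`φ₀ ∈ X'₊ \ {0}` satisfy `U* φ₀ = r(U) φ₀`.  Then every `f ≠ 0` with `U f = r(U) f`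
satisfies `U |f| = r(U) |f|`, and either `f > 0` a.e. or `-f > 0` a.e. -/
theorem eigenfunction_abs_and_sign
    {α : Type*} [MeasurableSpace α] {μ : Measure α} [SigmaFinite μ]
    {p : ℝ≥0∞} [Fact (1 ≤ p)] (hp : p ≠ ∞)
    (U : Lp ℝ p μ →L[ℝ] Lp ℝ p μ)
    (hstrict : ∀ f : Lp ℝ p μ, 0 ≤ f → f ≠ 0 → ∀ᵐ x ∂μ, 0 < (U f) x)
    (r : ℝ) (hr : Tendsto (fun n : ℕ => ‖U ^ n‖ ^ (1 / (n : ℝ))) atTop (nhds r))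
    (hr0 : 0 < r)
    (φ₀ : Lp ℝ p μ →L[ℝ] ℝ) (hφ₀pos : ∀ f, 0 ≤ f → 0 ≤ φ₀ f) (hφ₀ne : φ₀ ≠ 0)
    (hφ₀ : ∀ f, φ₀ (U f) = r * φ₀ f) :
    ∀ f : Lp ℝ p μ, f ≠ 0 → U f = r • f →
      U |f| = r • |f| ∧ ((∀ᵐ x ∂μ, 0 < f x) ∨ (∀ᵐ x ∂μ, f x < 0)) :=
  eigenfunction_abs_and_sign_general hp U.toLinearMap hstrict r φ₀ hφ₀pos hφ₀ne hφ₀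
end
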